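/- Let k be a field of characteristic 0 and let A be a finite-dimensional cocommutative Hopf superalgebra over k. Then the cohomology ring H^•(A,k) = Ext^•_A(k,k) is a finitely generated k-algebra, and for every finite-dimensional ℤ/2-graded A-module M the cohomology H^•(A,M) = Ext^•_A(k,M) is a finitely generated module over H^•(A,k). -/

import Mathlib

open CategoryTheory TensorProduct

set_option synthInstance.maxHeartbeats 1000000
set_option maxHeartbeats 4000000

namespace Stmt1

section SuperHopf

variable (k : Type) [Field k] (A : Type) [Ring A] [Algebra k A]
variable (𝒜 : ZMod 2 → Submodule k A) [GradedAlgebra 𝒜]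

/-- the degree-`i` component of the `ℤ/2`-graded tensor product `A ⊗ A`:
the sum of the images of `𝒜 p ⊗ 𝒜 q` for `p + q = i` -/
noncomputable def tensorGrade (i : ZMod 2) : Submodule k (A ⊗[k] A) :=
  ⨆ (pq : ZMod 2 × ZMod 2) (_ : pq.1 + pq.2 = i),
    LinearMap.range (TensorProduct.map (𝒜 pq.1).subtype (𝒜 pq.2).subtype)

/-- the super-twist `τ(a ⊗ b) = (-1)^{|a|·|b|} b ⊗ a` on the `ℤ/2`-graded tensor square
of `A`, i.e. the braiding of the category of superspaces -/
noncomputable def superTwist : (𝒜 ᵍ⊗[k] 𝒜) ≃ₗ[k] (𝒜 ᵍ⊗[k] 𝒜) :=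
  (GradedTensorProduct.auxEquiv k 𝒜 𝒜).trans
    ((TensorProduct.gradedComm k (fun i => ↥(𝒜 i)) (fun i => ↥(𝒜 i))).trans
      (GradedTensorProduct.auxEquiv k 𝒜 𝒜).symm)

/-- the underlying linear map `A → A ⊗ A` of a comultiplication
`Δ : A → A ᵍ⊗ A` (recall that the graded tensor product is `A ⊗ A` as a vector space) -/
noncomputable def comulLin (comul : A →ₐ[k] (𝒜 ᵍ⊗[k] 𝒜)) : A →ₗ[k] A ⊗[k] A :=
  (GradedTensorProduct.of k 𝒜 𝒜).symm.toLinearMap ∘ₗ comul.toLinearMap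

/-- the data `(Δ, ε, χ)` makes the `ℤ/2`-graded algebra `A` into a cocommutative Hopf
superalgebra: `Δ : A → A ᵍ⊗ A` (an algebra homomorphism into the sign-twisted tensor
product) and `ε : A → k` are parity preserving, `Δ` is coassociative with counit `ε`, the
antipode `χ` is parity preserving and satisfies the antipode axiom, and `τ ∘ Δ = Δ` -/
structure IsHopfSuperalgebra (comul : A →ₐ[k] (𝒜 ᵍ⊗[k] 𝒜)) (counit : A →ₐ[k] k)
    (antipode : A →ₗ[k] A) : Prop where
  comul_parity : ∀ i : ZMod 2, ∀ a ∈ 𝒜 i, comulLin k A 𝒜 comul a ∈ tensorGrade k A 𝒜 i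
  counit_parity : ∀ a ∈ 𝒜 1, counit a = 0
  antipode_parity : ∀ i : ZMod 2, ∀ a ∈ 𝒜 i, antipode a ∈ 𝒜 i
  coassoc :
    TensorProduct.map (comulLin k A 𝒜 comul) LinearMap.id ∘ₗ comulLin k A 𝒜 comul =
      (TensorProduct.assoc k A A A).symm.toLinearMap ∘ₗ
        TensorProduct.map LinearMap.id (comulLin k A 𝒜 comul) ∘ₗ comulLin k A 𝒜 comul
  counit_left :
    (TensorProduct.lid k A).toLinearMap ∘ₗ
        TensorProduct.map counit.toLinearMap LinearMap.id ∘ₗ comulLin k A 𝒜 comul =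
      LinearMap.id
  counit_right :
    (TensorProduct.rid k A).toLinearMap ∘ₗ
        TensorProduct.map LinearMap.id counit.toLinearMap ∘ₗ comulLin k A 𝒜 comul =
      LinearMap.id
  antipode_left :
    LinearMap.mul' k A ∘ₗ TensorProduct.map antipode LinearMap.id ∘ₗ comulLin k A 𝒜 comul =
      Algebra.linearMap k A ∘ₗ counit.toLinearMap
  antipode_right :
    LinearMap.mul' k A ∘ₗ TensorProduct.map LinearMap.id antipode ∘ₗ comulLin k A 𝒜 comul =
      Algebra.linearMap k A ∘ₗ counit.toLinearMap
  cocomm : ∀ a : A, superTwist k A 𝒜 (comul a) = comul a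

/-- the trivial module `k`, on which `A` acts through the counit `ε`, as an object of the
category of (ungraded) `A`-modules -/
noncomputable def trivCat (counit : A →ₐ[k] k) : ModuleCat.{0} A :=
  letI : Module A k := Module.compHom k counit.toRingHom
  ModuleCat.of A k

end SuperHopf

section ExtMachinery

variable {k : Type} [Field k] {A : Type} [Ring A] [Algebra k A]

noncomputable instance : HasDerivedCategory.{1} (ModuleCat.{0} A) :=
  HasDerivedCategory.standard _

instance : HasExt.{1} (ModuleCat.{0} A) :=
  CategoryTheory.hasExt_of_hasDerivedCategory _

open Abelian in
lemma Ext_mk₀_add {X Y : ModuleCat.{0} A} (f g : X ⟶ Y) :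
    Ext.mk₀ (f + g) = Ext.mk₀ f + Ext.mk₀ g := by
  apply Ext.ext
  rw [Ext.add_hom, Ext.mk₀_hom, Ext.mk₀_hom, Ext.mk₀_hom, Functor.map_add]
  simp [ShiftedHom.mk₀, Preadditive.add_comp]

open Abelian in
/-- the `k`-vector space structure on the Ext-groups of `A`-modules, where `c • x` is the
Yoneda composite of `x` with `c • 𝟙` -/
noncomputable instance extModule (X Y : ModuleCat.{0} A) (N : ℕ) :
    Module k (Ext X Y N) where
  smul c x := (Ext.mk₀ (c • 𝟙 X)).comp x (zero_add N)
  one_smul x := by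
    show (Ext.mk₀ ((1 : k) • 𝟙 X)).comp x (zero_add N) = x
    rw [one_smul]
    exact Ext.mk₀_id_comp x
  mul_smul a b x := by
    show (Ext.mk₀ ((a * b) • 𝟙 X)).comp x (zero_add N) =
      (Ext.mk₀ (a • 𝟙 X)).comp ((Ext.mk₀ (b • 𝟙 X)).comp x (zero_add N)) (zero_add N)
    rw [Ext.mk₀_comp_mk₀_assoc (a • 𝟙 X) (b • 𝟙 X) x]
    congr 2
    simp [smul_smul, mul_comm a b]
  smul_zero a := Ext.comp_zero _ _ _ _ _
  smul_add a x y := Ext.comp_add _ _ _ _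
  add_smul a b x := by
    show (Ext.mk₀ ((a + b) • 𝟙 X)).comp x (zero_add N) =
      (Ext.mk₀ (a • 𝟙 X)).comp x (zero_add N) + (Ext.mk₀ (b • 𝟙 X)).comp x (zero_add N)
    rw [add_smul, Ext_mk₀_add, Ext.add_comp]
  zero_smul x := by
    show (Ext.mk₀ ((0 : k) • 𝟙 X)).comp x (zero_add N) = 0
    rw [zero_smul, Ext.mk₀_zero, Ext.zero_comp]

open Abelian in
/-- membership in the `k`-subalgebra of the cohomology ring
`H^•(A, k) = Ext^•_A(k, k)` generated by a family `S` of homogeneous elements, where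
multiplication is the Yoneda composition product -/
inductive ExtAlgGen (X : ModuleCat.{0} A) (S : ∀ N : ℕ, Set (Ext X X N)) :
    ∀ N : ℕ, Ext X X N → Prop
  | zero (N : ℕ) : ExtAlgGen X S N 0
  | of {N : ℕ} {x : Ext X X N} : x ∈ S N → ExtAlgGen X S N x
  | one : ExtAlgGen X S 0 (Ext.mk₀ (𝟙 X))
  | add {N : ℕ} {x y : Ext X X N} :
      ExtAlgGen X S N x → ExtAlgGen X S N y → ExtAlgGen X S N (x + y)
  | smul (c : k) {N : ℕ} {x : Ext X X N} : ExtAlgGen X S N x → ExtAlgGen X S N (c • x)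
  | mul {a b : ℕ} {x : Ext X X a} {y : Ext X X b} :
      ExtAlgGen X S a x → ExtAlgGen X S b y → ExtAlgGen X S (a + b) (x.comp y rfl)

open Abelian in
/-- membership in the `H^•(A,k)`-submodule of the cohomology `H^•(A, M) = Ext^•_A(k, M)`
generated by a family `S` of homogeneous elements, where `H^•(A,k)` acts by Yoneda
composition -/
inductive ExtModGen (X Y : ModuleCat.{0} A) (S : ∀ N : ℕ, Set (Ext X Y N)) :
    ∀ N : ℕ, Ext X Y N → Prop
  | zero (N : ℕ) : ExtModGen X Y S N 0
  | of {N : ℕ} {x : Ext X Y N} : x ∈ S N → ExtModGen X Y S N x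
  | add {N : ℕ} {x y : Ext X Y N} :
      ExtModGen X Y S N x → ExtModGen X Y S N y → ExtModGen X Y S N (x + y)
  | smul (c : k) {N : ℕ} {x : Ext X Y N} : ExtModGen X Y S N x → ExtModGen X Y S N (c • x)
  | act {a b : ℕ} (r : Ext X X a) {x : Ext X Y b} :
      ExtModGen X Y S b x → ExtModGen X Y S (a + b) (r.comp x rfl)

end ExtMachinery

set_option linter.all false

section Syzygy

open Abelian

variable {A : Type} [Ring A]

/-- a chain of short exact sequences `0 → X (N+1) → Q N → X N → 0` with projective middle terms -/
structure SyzChain (A : Type) [Ring A] where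
  X : ℕ → ModuleCat.{0} A
  Q : ℕ → ModuleCat.{0} A
  f : ∀ N, X (N + 1) ⟶ Q N
  g : ∀ N, Q N ⟶ X N
  w : ∀ N, f N ≫ g N = 0
  ex : ∀ N, (ShortComplex.mk (f N) (g N) (w N)).ShortExact
  proj : ∀ N, Projective (Q N)

namespace SyzChain

variable (C : SyzChain A)

/-- the class of the `N`th extension -/
noncomputable def cls (N : ℕ) : Ext (C.X N) (C.X (N + 1)) 1 := (C.ex N).extClass

/-- iterated Yoneda product of the extension classes -/
noncomputable def iter : ∀ N : ℕ, Ext (C.X 0) (C.X N) N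
  | 0 => Ext.mk₀ (𝟙 (C.X 0))
  | N + 1 => (iter N).comp (C.cls N) rfl

lemma iter_surj_aux (M : ModuleCat.{0} A) : ∀ (N j n : ℕ) (h : N + j = n) (y : Ext (C.X 0) M n),
    ∃ w : Ext (C.X N) M j, (C.iter N).comp w h = y := by
  intro N
  induction N with
  | zero =>
    intro j n h y
    obtain rfl : j = n := by omega
    exact ⟨y, by simp [iter]⟩
  | succ N ih =>
    intro j n h y
    obtain ⟨w, hw⟩ := ih (1 + j) n (by omega) y
    haveI := C.proj N
    obtain ⟨w', hw'⟩ := Ext.contravariant_sequence_exact₃ (C.ex N) M w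
      (by
        have : Subsingleton (Ext (C.Q N) M (1 + j)) := by
          rw [add_comm]; exact Ext.subsingleton_of_projective (C.Q N) M j
        exact Subsingleton.elim _ _) rfl
    refine ⟨w', ?_⟩
    rw [← hw, ← hw', iter]
    exact Ext.comp_assoc _ _ _ _ _ (by omega)

lemma iter_surj (M : ModuleCat.{0} A) (N : ℕ) (y : Ext (C.X 0) M N) :
    ∃ z : C.X N ⟶ M, (C.iter N).comp (Ext.mk₀ z) (add_zero N) = y := by
  obtain ⟨w, hw⟩ := C.iter_surj_aux M N 0 N (add_zero N) y
  obtain ⟨z, rfl⟩ := (Ext.mk₀_bijective _ _).2 w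
  exact ⟨z, hw⟩

/-- a degree `-1` endomorphism of the chain -/
structure Op where
  a : ∀ N, C.X (N + 1) ⟶ C.X N
  b : ∀ N, C.Q (N + 1) ⟶ C.Q N
  c1 : ∀ N, a (N + 1) ≫ C.f N = C.f (N + 1) ≫ b N
  c2 : ∀ N, b N ≫ C.g N = C.g (N + 1) ≫ a N

variable {C}

/-- the degree one class attached to an operator -/
noncomputable def Op.cl (o : C.Op) : Ext (C.X 0) (C.X 0) 1 :=
  (C.cls 0).comp (Ext.mk₀ (o.a 0)) (add_zero 1)

lemma Op.nat (o : C.Op) (N : ℕ) :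
    (C.cls (N + 1)).comp (Ext.mk₀ (o.a (N + 1))) (add_zero 1) =
      (Ext.mk₀ (o.a N)).comp (C.cls N) (zero_add 1) :=
  ShortComplex.ShortExact.extClass_naturality (C.ex (N + 1)) (C.ex N)
    { τ₁ := o.a (N + 1)
      τ₂ := o.b N
      τ₃ := o.a N
      comm₁₂ := o.c1 N
      comm₂₃ := o.c2 N }

lemma Op.iter_comm (o : C.Op) (N n : ℕ) (h : 1 + N = n) (h' : (N + 1) + 0 = n) :
    (C.iter (N + 1)).comp (Ext.mk₀ (o.a N)) h' = o.cl.comp (C.iter N) h := by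
  induction N generalizing n with
  | zero =>
    obtain rfl : n = 1 := by omega
    simp [iter, Op.cl]
  | succ N ih =>
    have e1 : (C.iter (N + 1 + 1)).comp (Ext.mk₀ (o.a (N + 1))) h' =
        (C.iter (N + 1)).comp ((C.cls (N + 1)).comp (Ext.mk₀ (o.a (N + 1))) (add_zero 1))
          (by omega) := by
      rw [iter]
      exact Ext.comp_assoc _ _ _ _ _ (by omega)
    rw [e1, o.nat N]
    rw [← Ext.comp_assoc (a₁₂ := 1 + N) _ _ _ (by omega) (by omega) (by omega)]
    rw [ih (1 + N) rfl (by omega)]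
    rw [iter]
    exact Ext.comp_assoc _ _ _ _ _ (by omega)

lemma Op.iter_comm_mk (o : C.Op) (N n : ℕ) (h : 1 + N = n) (h' : (N + 1) + 0 = n)
    {M : ModuleCat.{0} A} (z : C.X N ⟶ M) :
    (C.iter (N + 1)).comp (Ext.mk₀ (o.a N ≫ z)) h' =
      o.cl.comp ((C.iter N).comp (Ext.mk₀ z) (add_zero N)) h := by
  rw [← Ext.mk₀_comp_mk₀]
  rw [← Ext.comp_assoc (a₁₂ := n) _ _ _ (by omega) (by omega) (by omega)]
  rw [o.iter_comm N n h (by omega)]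
  exact Ext.comp_assoc _ _ _ _ _ (by omega)

end SyzChain

end Syzygy

section Resol

variable {A : Type} [Ring A]

/-- an exact complex of projective modules in nonnegative degrees -/
structure Resol (A : Type) [Ring A] where
  Q : ℕ → Type
  [acg : ∀ N, AddCommGroup (Q N)]
  [mod : ∀ N, Module A (Q N)]
  proj : ∀ N, Module.Projective A (Q N)
  D : ∀ N, Q (N + 1) →ₗ[A] Q N
  DD : ∀ N z, D N (D (N + 1) z) = 0
  exact : ∀ N z, D N z = 0 → ∃ w, D (N + 1) w = z

attribute [instance] Resol.acg Resol.mod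

namespace Resol

variable (R : Resol A)

/-- the syzygy chain of a resolution -/
noncomputable def chain : SyzChain A where
  X N := ModuleCat.of A (R.Q N ⧸ LinearMap.range (R.D N))
  Q N := ModuleCat.of A (R.Q N)
  f N := ModuleCat.ofHom ((LinearMap.range (R.D (N + 1))).liftQ (R.D N) (by
    rintro _ ⟨z, rfl⟩; exact R.DD N z))
  g N := ModuleCat.ofHom (LinearMap.range (R.D N)).mkQ
  w N := by
    ext x
    simp
  ex N := by
    refine @ShortComplex.ShortExact.mk _ _ _ _ ?_ ?_ ?_
    · rw [ShortComplex.moduleCat_exact_iff]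
      intro x hx
      have hx' : x ∈ LinearMap.range (R.D N) := by
        simpa using hx
      obtain ⟨y, hy⟩ := hx'
      exact ⟨(LinearMap.range (R.D (N + 1))).mkQ y, by simpa using hy⟩
    · rw [ModuleCat.mono_iff_injective]
      rw [injective_iff_map_eq_zero]
      intro x hx
      obtain ⟨x, rfl⟩ := Submodule.Quotient.mk_surjective _ x
      have hx' : R.D N x = 0 := by simpa using hx
      obtain ⟨w, rfl⟩ := R.exact N x hx'
      rw [Submodule.Quotient.mk_eq_zero]
      exact ⟨w, rfl⟩
    · rw [ModuleCat.epi_iff_surjective]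
      exact Submodule.mkQ_surjective _
  proj N := by
    have := R.proj N
    exact (IsProjective.iff_projective _).1 (R.proj N)

/-- an operator on the chain coming from an operator on the resolution -/
noncomputable def op (T : ∀ N, R.Q (N + 1) →ₗ[A] R.Q N)
    (hT : ∀ N z, R.D N (T (N + 1) z) = T N (R.D (N + 1) z)) : R.chain.Op where
  a N := ModuleCat.ofHom (Submodule.mapQ _ _ (T N) (by
    rintro _ ⟨z, rfl⟩
    exact ⟨T (N + 1) z, hT N z⟩))
  b N := ModuleCat.ofHom (T N)
  c1 N := by
    ext x
    obtain ⟨x, rfl⟩ := Submodule.Quotient.mk_surjective _ x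
    exact hT N x
  c2 N := by
    ext x
    rfl

end Resol
end Resol

section Koszul

variable {k : Type} [Field k] [CharZero k] {A : Type} [Ring A] [Algebra k A]

variable (k A) in
/-- combinatorial data making the Koszul complex of `x` exact -/
structure KosData (n : ℕ) where
  x : Fin n → A
  anti : ∀ i j, x i * x j + x j * x i = 0
  pd : Fin n → A →ₗ[k] A
  M : Fin n → Fin n → A →ₗ[k] A
  pd_mul : ∀ i j a, pd j (a * x i) + pd j a * x i = M i j a
  F : ℕ → Submodule k A
  F_zero : F 0 = ⊥
  F_top : ∃ L, F L = ⊤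
  M_F : ∀ i j m, ∀ a ∈ F (m + 1), M i j a - (if i = j then a else 0) ∈ F m
  pd_F : ∀ m, ∀ a ∈ F (m + 1), ∑ j, pd j a * x j - (m : k) • a ∈ F m

namespace KosData

variable {n : ℕ} (K : KosData k A n)

/-- the Koszul differential on all functions -/
noncomputable def d : ((Fin n →₀ ℕ) → A) →ₗ[A] ((Fin n →₀ ℕ) → A) where
  toFun z α := ∑ i, z (α + Finsupp.single i 1) * K.x i
  map_add' z w := by ext α; simp [add_mul, Finset.sum_add_distrib]
  map_smul' c z := by ext α; simp [mul_assoc, Finset.mul_sum]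

lemma d_apply (z : (Fin n →₀ ℕ) → A) (α) :
    K.d z α = ∑ i, z (α + Finsupp.single i 1) * K.x i := rfl

/-- the homotopy -/
noncomputable def h : ((Fin n →₀ ℕ) → A) →ₗ[k] ((Fin n →₀ ℕ) → A) where
  toFun z α := ∑ j, (α j : k) • K.pd j (z (α - Finsupp.single j 1))
  map_add' z w := by ext α; simp [Finset.sum_add_distrib]
  map_smul' c z := by ext α; simp [Finset.smul_sum, smul_comm c]

lemma h_apply (z : (Fin n →₀ ℕ) → A) (α) :
    K.h z α = ∑ j, (α j : k) • K.pd j (z (α - Finsupp.single j 1)) := rfl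

lemma d_d (z : (Fin n →₀ ℕ) → A) : K.d (K.d z) = 0 := by
  have : (2 : k) • K.d (K.d z) = 0 := by
    ext α
    have e : K.d (K.d z) α = ∑ i, ∑ j,
        z (α + Finsupp.single i 1 + Finsupp.single j 1) * (K.x j * K.x i) := by
      simp [d_apply, Finset.sum_mul, mul_assoc]
    have e2 : K.d (K.d z) α = ∑ i, ∑ j,
        z (α + Finsupp.single i 1 + Finsupp.single j 1) * (K.x i * K.x j) := by
      rw [e, Finset.sum_comm]
      simp [add_right_comm]
    rw [two_smul, Pi.add_apply]
    nth_rw 1 [e]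
    rw [e2, ← Finset.sum_add_distrib]
    simp [← Finset.sum_add_distrib, ← mul_add, K.anti]
  exact (smul_eq_zero.1 this).resolve_left two_ne_zero

lemma u_apply (z : (Fin n →₀ ℕ) → A) (α) : K.d (K.h z) α + K.h (K.d z) α =
    ∑ j, ∑ i, (α j : k) • K.M i j (z (α - Finsupp.single j 1 + Finsupp.single i 1)) +
      ∑ i, K.pd i (z α) * K.x i := by
  have e1 : K.d (K.h z) α = ∑ j, ∑ i, (α j : k) •
      (K.pd j (z (α - Finsupp.single j 1 + Finsupp.single i 1)) * K.x i) +
      ∑ i, K.pd i (z α) * K.x i := by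
    rw [d_apply, Finset.sum_comm, ← Finset.sum_add_distrib]
    refine Finset.sum_congr rfl fun i _ => ?_
    rw [h_apply, Finset.sum_mul]
    have : K.pd i (z α) * K.x i = ∑ j, if j = i then K.pd i (z α) * K.x i else 0 := by simp
    rw [this, ← Finset.sum_add_distrib]
    refine Finset.sum_congr rfl fun j _ => ?_
    by_cases hj : α j = 0
    · by_cases hij : j = i
      · subst hij
        simp [hj]
      · simp [hj, hij, Finsupp.single_apply, Ne.symm hij]
    · have hα : α + Finsupp.single i 1 - Finsupp.single j 1 =
          α - Finsupp.single j 1 + Finsupp.single i 1 := by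
        ext l
        simp only [Finsupp.tsub_apply, Finsupp.add_apply, Finsupp.single_apply]
        split_ifs <;> subst_vars <;> omega
      rw [hα]
      by_cases hij : j = i
      · subst hij
        have : α - Finsupp.single j 1 + Finsupp.single j 1 = α := by
          ext l
          simp only [Finsupp.tsub_apply, Finsupp.add_apply, Finsupp.single_apply]
          split_ifs <;> subst_vars <;> omega
        simp [this, add_smul, add_mul]
      · simp [hij, Finsupp.single_apply, Ne.symm hij]
  have e2 : K.h (K.d z) α = ∑ j, ∑ i, (α j : k) •
      (K.pd j (z (α - Finsupp.single j 1 + Finsupp.single i 1) * K.x i)) := by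
    rw [h_apply]
    refine Finset.sum_congr rfl fun j _ => ?_
    rw [d_apply, map_sum, Finset.smul_sum]
  rw [e1, e2, add_right_comm]
  congr 1
  simp only [← Finset.sum_add_distrib, ← smul_add]
  refine Finset.sum_congr rfl fun j _ => Finset.sum_congr rfl fun i _ => ?_
  rw [← K.pd_mul, add_comm]

lemma u_F (N m : ℕ) (z : (Fin n →₀ ℕ) → A)
    (hz : ∀ α, z α ∈ K.F (m + 1)) (α) (hα : α.degree = N) :
    K.d (K.h z) α + K.h (K.d z) α - ((N + m : ℕ) : k) • z α ∈ K.F m := by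
  rw [u_apply]
  have h1 : (∑ j, ∑ i, (α j : k) • K.M i j (z (α - Finsupp.single j 1 + Finsupp.single i 1)))
      - (N : k) • z α ∈ K.F m := by
    have : (N : k) • z α = ∑ j, ∑ i, (α j : k) •
        (if i = j then z (α - Finsupp.single j 1 + Finsupp.single i 1) else 0) := by
      rw [← hα, Finsupp.degree_eq_sum]
      push_cast
      rw [Finset.sum_smul]
      refine Finset.sum_congr rfl fun j _ => ?_
      rw [← Finset.smul_sum, Finset.sum_ite_eq' Finset.univ j]
      by_cases hj : α j = 0
      · simp [hj]
      · have : α - Finsupp.single j 1 + Finsupp.single j 1 = α := by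
          ext l
          simp only [Finsupp.tsub_apply, Finsupp.add_apply, Finsupp.single_apply]
          split_ifs <;> subst_vars <;> omega
        simp [this]
    rw [this, ← Finset.sum_sub_distrib]
    refine Submodule.sum_mem _ fun j _ => ?_
    rw [← Finset.sum_sub_distrib]
    refine Submodule.sum_mem _ fun i _ => ?_
    rw [← smul_sub]
    exact Submodule.smul_mem _ _ (K.M_F i j m _ (hz _))
  have h2 := K.pd_F m _ (hz α)
  have := Submodule.add_mem _ h1 h2
  convert this using 1
  push_cast
  rw [add_smul]
  abel

/-- functions supported in degree `N` -/
noncomputable def S (A : Type) [Ring A] (n N : ℕ) : Submodule A ((Fin n →₀ ℕ) → A) where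
  carrier := {z | ∀ α, α.degree ≠ N → z α = 0}
  add_mem' {z w} hz hw α h := by simp [hz α h, hw α h]
  zero_mem' α _ := rfl
  smul_mem' c z hz α h := by simp [hz α h]

lemma mem_S {N : ℕ} {z : (Fin n →₀ ℕ) → A} : z ∈ S A n N ↔ ∀ α, α.degree ≠ N → z α = 0 := Iff.rfl

/-- coordinates on `S` -/
noncomputable def Sequiv (A : Type) [Ring A] (n N : ℕ) :
    S A n N ≃ₗ[A] ({α : Fin n →₀ ℕ // α.degree = N} → A) where
  toFun z α := z.1 α.1
  map_add' z w := rfl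
  map_smul' c z := rfl
  invFun w := ⟨fun α => if h : α.degree = N then w ⟨α, h⟩ else 0, fun α h => by simp [h]⟩
  left_inv z := by
    ext α
    by_cases h : α.degree = N
    · simp [h]
    · simp [h, z.2 α h]
  right_inv w := by
    ext α
    simp [α.2]

instance finite_deg (n N : ℕ) : Finite {α : Fin n →₀ ℕ // α.degree = N} :=
  ((Finsupp.finite_of_degree_le N).subset (fun α (h : α.degree = N) => h.le)).to_subtype

lemma d_mem {N : ℕ} {z : (Fin n →₀ ℕ) → A} (hz : z ∈ S A n (N + 1)) : K.d z ∈ S A n N := by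
  intro α h
  rw [d_apply]
  refine Finset.sum_eq_zero fun i _ => ?_
  rw [hz _ (by simpa using h), zero_mul]

lemma h_mem {N : ℕ} {z : (Fin n →₀ ℕ) → A} (hz : z ∈ S A n N) : K.h z ∈ S A n (N + 1) := by
  intro α h
  rw [h_apply]
  refine Finset.sum_eq_zero fun i _ => ?_
  by_cases hi : α i = 0
  · simp [hi]
  · rw [hz, map_zero, smul_zero]
    intro h'
    apply h
    have : α - Finsupp.single i 1 + Finsupp.single i 1 = α := by
      ext l
      simp only [Finsupp.tsub_apply, Finsupp.add_apply, Finsupp.single_apply]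
      split_ifs <;> subst_vars <;> omega
    rw [← this, map_add, h']
    simp

lemma u_inj {N : ℕ} {z : (Fin n →₀ ℕ) → A} (hz : z ∈ S A n (N + 1))
    (hu : K.d (K.h z) + K.h (K.d z) = 0) : z = 0 := by
  obtain ⟨L, hL⟩ := K.F_top
  have key : ∀ m, (∀ α, z α ∈ K.F m) → ∀ α, z α ∈ K.F 0 := by
    intro m
    induction m with
    | zero => exact fun h => h
    | succ m ih =>
      intro hm
      apply ih
      intro α
      by_cases hα : α.degree = N + 1
      · have := K.u_F (N + 1) m z hm α hα
        have e : K.d (K.h z) α + K.h (K.d z) α = 0 := congrFun hu α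
        rw [e, zero_sub, Submodule.neg_mem_iff] at this
        exact (Submodule.smul_mem_iff _ (by exact_mod_cast by omega)).1 this
      · rw [hz α hα]; exact Submodule.zero_mem _
  have h0 := key L (fun α => by rw [hL]; trivial)
  ext α
  simpa [K.F_zero] using h0 α

lemma exact [FiniteDimensional k A] {N : ℕ} {z : (Fin n →₀ ℕ) → A} (hz : z ∈ S A n (N + 1))
    (hd : K.d z = 0) : ∃ w ∈ S A n (N + 2), K.d w = z := by
  haveI : Module.Finite k (S A n (N + 1)) :=
    Module.Finite.equiv ((Sequiv A n (N + 1)).restrictScalars k).symm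
  let C : Submodule k (S A n (N + 1)) :=
    LinearMap.ker ((K.d.restrictScalars k) ∘ₗ ((S A n (N + 1)).subtype.restrictScalars k))
  have hC : ∀ c : C, K.d c.1.1 = 0 := fun c => LinearMap.mem_ker.1 c.2
  let U : C →ₗ[k] C := 
    { toFun := fun c => ⟨⟨K.d (K.h c.1.1), K.d_mem (K.h_mem c.1.2)⟩, by
        simp [C, K.d_d]⟩
      map_add' := fun a b => by ext; simp
      map_smul' := fun a b => by ext; simp }
  have hU : Function.Injective U := by
    rw [injective_iff_map_eq_zero]
    intro c hc
    have h1 : K.d (K.h c.1.1) = 0 := congrArg (fun t : C => t.1.1) hc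
    have := K.u_inj c.1.2 (by rw [h1, hC c, map_zero, add_zero])
    ext1; ext1; exact this
  have hfin : FiniteDimensional k C := FiniteDimensional.finiteDimensional_submodule C
  have hsurj : Function.Surjective U := (LinearMap.injective_iff_surjective (K := k) (V := C)).1 hU
  obtain ⟨c, hc⟩ := hsurj ⟨⟨z, hz⟩, LinearMap.mem_ker.2 hd⟩
  exact ⟨K.h c.1.1, K.h_mem c.1.2, congrArg (fun t : C => t.1.1) hc⟩

/-- the shift operators -/
noncomputable def xi (A : Type) [Ring A] {n : ℕ} (i : Fin n) : ((Fin n →₀ ℕ) → A) →ₗ[A] ((Fin n →₀ ℕ) → A) where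
  toFun z α := z (α + Finsupp.single i 1)
  map_add' z w := rfl
  map_smul' c z := rfl

lemma xi_mem (i : Fin n) {N : ℕ} {z : (Fin n →₀ ℕ) → A} (hz : z ∈ S A n (N + 1)) :
    xi A i z ∈ S A n N := fun α h => hz _ (by simpa using h)

lemma xi_d (i : Fin n) (z : (Fin n →₀ ℕ) → A) : K.d (xi A i z) = xi A i (K.d z) := by
  ext α
  simp [xi, d_apply, add_right_comm]

/-- the Koszul resolution -/
noncomputable def resol [FiniteDimensional k A] : Resol A where
  Q N := S A n N
  proj N := Module.Projective.of_equiv (Sequiv A n N).symm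
  D N := K.d.restrict (fun _ h => K.d_mem h)
  DD N z := by ext1; exact K.d_d z.1
  exact N z hz := by
    obtain ⟨w, hw, hwz⟩ := K.exact z.2 (congrArg Subtype.val hz)
    exact ⟨⟨w, hw⟩, Subtype.ext hwz⟩

/-- the shift operators on the chain -/
noncomputable def ops [FiniteDimensional k A] (i : Fin n) : K.resol.chain.Op :=
  K.resol.op (fun N => (xi A i).restrict (fun _ h => xi_mem i h))
    (fun N z => Subtype.ext (K.xi_d i z.1))

end KosData

end Koszul

section GenericExt

open Abelian

lemma comp_mk₀_smul' {R : Type} [Ring R] {C : Type 1} [Category.{0} C] [Abelian C] [Linear R C]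
    [HasExt.{1} C] {X Y Z : C} {n : ℕ} (x : Ext X Y n) (z : Y ⟶ Z) (r : R) :
    x.comp (Ext.mk₀ (r • z)) (add_zero n) =
      (Ext.mk₀ (r • 𝟙 X)).comp (x.comp (Ext.mk₀ z) (add_zero n)) (zero_add n) := by
  rw [Ext.mk₀_smul, Ext.mk₀_smul, Ext.comp_smul, Ext.smul_comp, Ext.mk₀_id_comp]

lemma exists_smul {k : Type} [Field k] {A : Type} [Ring A] [Algebra k A] {X Y Z : ModuleCat.{0} A}
    {n : ℕ} (x : Ext X Y n) (z : Y ⟶ Z) (c : k) :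
    ∃ z' : Y ⟶ Z, (∀ y, z'.hom y = algebraMap k A c • z.hom y) ∧ ∃ r : Ext X X 0,
      x.comp (Ext.mk₀ z') (add_zero n) = r.comp (x.comp (Ext.mk₀ z) (add_zero n)) (zero_add n) :=
  ⟨c • z, fun _ => rfl, _, comp_mk₀_smul' x z c⟩

end GenericExt

section Pairing

variable {k : Type} [Field k] {A : Type} [Ring A] [Algebra k A] {n : ℕ}
variable {M : Type} [AddCommGroup M] [Module A M] [Module k M] [IsScalarTower k A M]

/-- the pairing of a family with a polynomial -/
noncomputable def phi (w : (Fin n →₀ ℕ) → A) : MvPolynomial (Fin n) k →ₗ[k] A :=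
  (MvPolynomial.basisMonomials (Fin n) k).constr k w

lemma phi_monomial (w : (Fin n →₀ ℕ) → A) (α) (c : k) :
    phi w (MvPolynomial.monomial α c) = c • w α := by
  have : MvPolynomial.monomial α c = c • MvPolynomial.basisMonomials (Fin n) k α := by
    simp [MvPolynomial.coe_basisMonomials, MvPolynomial.smul_monomial]
  rw [this, map_smul, phi, Module.Basis.constr_basis]

lemma phi_add (w w' : (Fin n →₀ ℕ) → A) (f : MvPolynomial (Fin n) k) :
    phi (w + w') f = phi w f + phi w' f := by
  induction f using MvPolynomial.induction_on' with
  | monomial α c => simp [phi_monomial]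
  | add p q hp hq => simp only [map_add, hp, hq]; abel

lemma phi_smul (a : A) (w : (Fin n →₀ ℕ) → A) (f : MvPolynomial (Fin n) k) :
    phi (a • w) f = a * phi w f := by
  induction f using MvPolynomial.induction_on' with
  | monomial α c => simp [phi_monomial]
  | add p q hp hq => simp only [map_add, hp, hq, mul_add]

lemma phi_X (i : Fin n) (w : (Fin n →₀ ℕ) → A) (f : MvPolynomial (Fin n) k) :
    phi w (MvPolynomial.X i * f) = phi (KosData.xi A i w) f := by
  induction f using MvPolynomial.induction_on' with
  | monomial α c =>
    rw [MvPolynomial.X, MvPolynomial.monomial_mul, phi_monomial, phi_monomial]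
    simp [KosData.xi, add_comm]
  | add p q hp hq => simp only [mul_add, map_add, hp, hq]

/-- the pairing with values in a module -/
noncomputable def pr (w : (Fin n →₀ ℕ) → A) : (MvPolynomial (Fin n) k ⊗[k] M) →ₗ[k] M :=
  TensorProduct.lift ((Algebra.lsmul k k M).toLinearMap ∘ₗ phi w)

lemma pr_tmul (w : (Fin n →₀ ℕ) → A) (f : MvPolynomial (Fin n) k) (m : M) :
    pr w (f ⊗ₜ[k] m) = phi w f • m := by
  simp [pr]

lemma pr_add (w w' : (Fin n →₀ ℕ) → A) (v : MvPolynomial (Fin n) k ⊗[k] M) :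
    pr (w + w') v = pr w v + pr w' v := by
  induction v using TensorProduct.induction_on with
  | zero => simp
  | tmul f m => simp [pr_tmul, phi_add, add_smul]
  | add p q hp hq => simp only [map_add, hp, hq]; abel

lemma pr_smul (a : A) (w : (Fin n →₀ ℕ) → A) (v : MvPolynomial (Fin n) k ⊗[k] M) :
    pr (a • w) v = a • pr w v := by
  induction v using TensorProduct.induction_on with
  | zero => simp
  | tmul f m => simp [pr_tmul, phi_smul, mul_smul]
  | add p q hp hq => simp only [map_add, hp, hq, smul_add]

lemma pr_X (i : Fin n) (w : (Fin n →₀ ℕ) → A) (v : MvPolynomial (Fin n) k ⊗[k] M) :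
    pr w ((MvPolynomial.X i : MvPolynomial (Fin n) k) • v) = pr (KosData.xi A i w) v := by
  induction v using TensorProduct.induction_on with
  | zero => simp
  | tmul f m => rw [TensorProduct.smul_tmul', pr_tmul, pr_tmul, smul_eq_mul, phi_X]
  | add p q hp hq => simp only [smul_add, map_add, hp, hq]

lemma pr_C (c : k) (w : (Fin n →₀ ℕ) → A) (v : MvPolynomial (Fin n) k ⊗[k] M) :
    pr w ((MvPolynomial.C c : MvPolynomial (Fin n) k) • v) = algebraMap k A c • pr w v := by
  induction v using TensorProduct.induction_on with
  | zero => simp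
  | tmul f m =>
    rw [TensorProduct.smul_tmul', pr_tmul, pr_tmul, smul_eq_mul, MvPolynomial.C_mul', map_smul,
      ← mul_smul, Algebra.smul_def]
  | add p q hp hq => simp only [smul_add, map_add, hp, hq]

lemma pr_zero (v : MvPolynomial (Fin n) k ⊗[k] M) : pr (0 : (Fin n →₀ ℕ) → A) v = 0 := by
  have := pr_smul (0 : A) (0 : (Fin n →₀ ℕ) → A) v
  simpa using this

/-- every linear map is a pairing -/
lemma exists_pr (N : ℕ) (z : KosData.S A n N →ₗ[A] M) :
    ∃ v : MvPolynomial (Fin n) k ⊗[k] M, (∀ w : KosData.S A n N, z w = pr w.1 v) ∧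
      ∀ N', N' ≠ N → ∀ w ∈ KosData.S A n N', pr w v = 0 := by
  classical
  letI := Fintype.ofFinite {α : Fin n →₀ ℕ // α.degree = N}
  refine ⟨∑ α : {α : Fin n →₀ ℕ // α.degree = N}, (MvPolynomial.monomial α.1 (1 : k)) ⊗ₜ[k]
    z ((KosData.Sequiv A n N).symm (Pi.single α 1)), ?_, ?_⟩
  · intro w
    have e : w = ∑ α : {α : Fin n →₀ ℕ // α.degree = N},
        (w.1 α.1) • (KosData.Sequiv A n N).symm (Pi.single α 1) := by
      apply (KosData.Sequiv A n N).injective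
      rw [map_sum]
      simp only [map_smul, LinearEquiv.apply_symm_apply]
      ext β
      simp [KosData.Sequiv, Pi.single_apply]
    conv_lhs => rw [e]
    rw [map_sum, map_sum]
    refine Finset.sum_congr rfl fun α _ => ?_
    rw [map_smul, pr_tmul, phi_monomial, one_smul]
  · intro N' hN w hw
    rw [map_sum]
    refine Finset.sum_eq_zero fun α _ => ?_
    rw [pr_tmul, phi_monomial, hw α.1 (by rw [α.2]; exact hN.symm), smul_zero, zero_smul]

end Pairing

section Noeth

open Abelian

variable {k : Type} [Field k] [CharZero k] {A : Type} [Ring A] [Algebra k A]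
  [FiniteDimensional k A] {n : ℕ} (K : KosData k A n)
variable {M : Type} [AddCommGroup M] [Module A M] [Module k M] [IsScalarTower k A M]
  [FiniteDimensional k M]

/-- a polynomial family represents a morphism from the `N`th syzygy -/
def Rep (N : ℕ) (z : K.resol.chain.X N ⟶ ModuleCat.of A M) (v : MvPolynomial (Fin n) k ⊗[k] M) :
    Prop := ∀ w : KosData.S A n N, z.hom (Submodule.Quotient.mk w) = pr w.1 v

variable {K} in
lemma Rep.unique {N : ℕ} {z z' : K.resol.chain.X N ⟶ ModuleCat.of A M}
    {v : MvPolynomial (Fin n) k ⊗[k] M} (h : Rep K N z v) (h' : Rep K N z' v) : z = z' := by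
  ext x
  obtain ⟨x, rfl⟩ := Submodule.Quotient.mk_surjective _ x
  exact (h x).trans (h' x).symm

lemma noeth_lemma (tr : ModuleCat.{0} A) (i : tr ⟶ K.resol.chain.X 0)
    (p : K.resol.chain.X 0 ⟶ tr) (hip : i ≫ p = 𝟙 tr) (N₀ : ℕ) :
    ∃ T : Finset (Σ N : ℕ, Ext tr (ModuleCat.of A M) N), (∀ t ∈ T, N₀ ≤ t.1) ∧
      ∀ N (y : Ext tr (ModuleCat.of A M) N), N₀ ≤ N → y ∈ AddSubgroup.closure
        {e | ∃ t ∈ T, ∃ (a : ℕ) (r : Ext tr tr a) (h : a + t.1 = N), e = r.comp t.2 h} := by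
  classical
  let W : Set (MvPolynomial (Fin n) k ⊗[k] M) :=
    {v | ∃ N, N₀ ≤ N ∧ ∃ z : K.resol.chain.X N ⟶ ModuleCat.of A M, Rep K N z v ∧
      (∀ N', N' ≠ N → ∀ w ∈ KosData.S A n N', pr w v = 0) ∧
      ∃ y : Ext tr (ModuleCat.of A M) N,
        (K.resol.chain.iter N).comp (Ext.mk₀ z) (add_zero N) =
          (Ext.mk₀ p).comp y (zero_add N)}
  have hfin : Module.Finite (MvPolynomial (Fin n) k) (MvPolynomial (Fin n) k ⊗[k] M) :=
    inferInstance
  have hnoe : IsNoetherian (MvPolynomial (Fin n) k) (MvPolynomial (Fin n) k ⊗[k] M) :=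
    isNoetherian_of_isNoetherianRing_of_finite _ _
  obtain ⟨s, hsW, hs⟩ := (Submodule.fg_span_iff_fg_span_finset_subset W).1
    (hnoe.noetherian (Submodule.span (MvPolynomial (Fin n) k) W))
  choose! dg hdg zz hzz hzz0 yy hyy using fun v (hv : v ∈ W) => hv
  let T : Finset (Σ N : ℕ, Ext tr (ModuleCat.of A M) N) := s.image fun v => ⟨dg v, yy v⟩
  let L : ∀ N, AddSubgroup (Ext (K.resol.chain.X 0) (ModuleCat.of A M) N) := fun N =>
    AddSubgroup.closure {e | ∃ t ∈ T, ∃ (a : ℕ) (r : Ext (K.resol.chain.X 0) tr a)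
      (h : a + t.1 = N), e = r.comp t.2 h}
  have hL : ∀ (N a b : ℕ) (h : a + N = b) (r : Ext (K.resol.chain.X 0) (K.resol.chain.X 0) a)
      (e : Ext (K.resol.chain.X 0) (ModuleCat.of A M) N), e ∈ L N → r.comp e h ∈ L b := by
    intro N a b h r e he
    induction he using AddSubgroup.closure_induction with
    | mem e he =>
      obtain ⟨t, ht, a', r', h', rfl⟩ := he
      refine AddSubgroup.subset_closure ⟨t, ht, a + a', r.comp r' rfl, by omega, ?_⟩
      exact (Ext.comp_assoc _ _ _ _ _ (by omega)).symm
    | zero => rw [Ext.comp_zero]; exact zero_mem _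
    | add x y _ _ hx hy => rw [Ext.comp_add]; exact add_mem hx hy
    | neg x _ hx => rw [Ext.comp_neg]; exact neg_mem hx
  let J : Submodule (MvPolynomial (Fin n) k) (MvPolynomial (Fin n) k ⊗[k] M) :=
    { carrier := {v | ∀ N, ∃ z : K.resol.chain.X N ⟶ ModuleCat.of A M, Rep K N z v ∧
        (K.resol.chain.iter N).comp (Ext.mk₀ z) (add_zero N) ∈ L N}
      add_mem' := by
        intro v v' hv hv' N
        obtain ⟨z, hz, hzL⟩ := hv N
        obtain ⟨z', hz', hzL'⟩ := hv' N
        refine ⟨z + z', fun w => ?_, ?_⟩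
        · exact (congrArg₂ (fun a b : M => a + b) (hz w) (hz' w)).trans (map_add _ _ _).symm
        · rw [Ext_mk₀_add, Ext.comp_add]
          exact add_mem hzL hzL'
      zero_mem' := by
        intro N
        refine ⟨0, fun w => ?_, ?_⟩
        · rw [map_zero]
          rfl
        · rw [Ext.mk₀_zero, Ext.comp_zero]
          exact zero_mem _
      smul_mem' := by
        intro f
        induction f using MvPolynomial.induction_on with
        | C c =>
          intro v hv N
          obtain ⟨z, hz, hzL⟩ := hv N
          obtain ⟨z', h1, r, h2⟩ := exists_smul (K.resol.chain.iter N) z c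
          refine ⟨z', fun w => ?_, ?_⟩
          · rw [pr_C, ← hz w]
            exact h1 _
          · rw [h2]
            exact hL _ _ _ _ _ _ hzL
        | add f g hf hg =>
          intro v hv N
          obtain ⟨z, hz, hzL⟩ := hf hv N
          obtain ⟨z', hz', hzL'⟩ := hg hv N
          refine ⟨z + z', fun w => ?_, ?_⟩
          · rw [add_smul]
            exact (congrArg₂ (fun a b : M => a + b) (hz w) (hz' w)).trans (map_add _ _ _).symm
          · rw [Ext_mk₀_add, Ext.comp_add]
            exact add_mem hzL hzL'
        | mul_X f j hf =>
          intro v hv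
          rw [mul_smul]
          refine hf (x := (MvPolynomial.X j : MvPolynomial (Fin n) k) • v) ?_
          intro N
          cases N with
          | zero =>
            refine ⟨0, fun w => ?_, ?_⟩
            · have h0 : KosData.xi A j w.1 = 0 := by
                ext α
                exact w.2 _ (by simp)
              rw [pr_X, h0, pr_zero]
              rfl
            · rw [Ext.mk₀_zero, Ext.comp_zero]
              exact zero_mem _
          | succ N =>
            obtain ⟨z, hz, hzL⟩ := hv N
            refine ⟨(K.ops j).a N ≫ z, fun w => ?_, ?_⟩
            · rw [pr_X]
              exact hz ⟨KosData.xi A j w.1, KosData.xi_mem j w.2⟩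
            · rw [(K.ops j).iter_comm_mk N (N + 1) (by omega) (by omega) z]
              exact hL _ _ _ _ _ _ hzL }
  have hWJ : ∀ v ∈ s, v ∈ J := by
    intro v hv N
    have hvW := hsW hv
    by_cases hN : N = dg v
    · subst hN
      refine ⟨zz v, hzz v hvW, ?_⟩
      rw [hyy v hvW]
      exact AddSubgroup.subset_closure ⟨⟨dg v, yy v⟩, Finset.mem_image_of_mem _ hv, 0,
        Ext.mk₀ p, _, rfl⟩
    · refine ⟨0, fun w => ?_, ?_⟩
      · rw [hzz0 v hvW N hN w.1 w.2]
        rfl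
      · rw [Ext.mk₀_zero, Ext.comp_zero]
        exact zero_mem _
  refine ⟨T, ?_, ?_⟩
  · intro t ht
    obtain ⟨v, hv, rfl⟩ := Finset.mem_image.1 ht
    exact hdg v (hsW hv)
  · intro N y hN
    obtain ⟨z, hz⟩ := K.resol.chain.iter_surj _ N ((Ext.mk₀ p).comp y (zero_add N))
    obtain ⟨v, hv, hv0⟩ := exists_pr (k := k) N
      (z.hom ∘ₗ (LinearMap.range (K.resol.D N)).mkQ : KosData.S A n N →ₗ[A] M)
    have hvW : v ∈ W := ⟨N, hN, z, hv, hv0, y, hz⟩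
    have hvJ : v ∈ J := by
      have h1 : v ∈ Submodule.span (MvPolynomial (Fin n) k) W := Submodule.subset_span hvW
      rw [hs] at h1
      exact (Submodule.span_le.2 hWJ) h1
    obtain ⟨z', hz', hzL⟩ := hvJ N
    obtain rfl : z = z' := Rep.unique hv hz'
    rw [hz] at hzL
    have key : ∀ e ∈ L N, (Ext.mk₀ i).comp e (zero_add N) ∈ AddSubgroup.closure
        {e | ∃ t ∈ T, ∃ (a : ℕ) (r : Ext tr tr a) (h : a + t.1 = N), e = r.comp t.2 h} := by
      intro e he
      induction he using AddSubgroup.closure_induction with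
      | mem e he =>
        obtain ⟨t, ht, a', r', h', rfl⟩ := he
        refine AddSubgroup.subset_closure ⟨t, ht, a', (Ext.mk₀ i).comp r' (zero_add _), h', ?_⟩
        exact (Ext.comp_assoc _ _ _ _ _ (by omega)).symm
      | zero => rw [Ext.comp_zero]; exact zero_mem _
      | add x y _ _ hx hy => rw [Ext.comp_add]; exact add_mem hx hy
      | neg x _ hx => rw [Ext.comp_neg]; exact neg_mem hx
    have := key _ hzL
    rwa [Ext.mk₀_comp_mk₀_assoc, hip, Ext.mk₀_id_comp] at this

end Noeth

section Final

open Abelian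

variable {k : Type} [Field k] [CharZero k] {A : Type} [Ring A] [Algebra k A]
  [FiniteDimensional k A] {n : ℕ} (K : KosData k A n) (counit : A →ₐ[k] k)

/-- concentrated in degree zero -/
noncomputable def e0 (A : Type) [Ring A] (n : ℕ) : A →ₗ[A] KosData.S A n 0 where
  toFun a := ⟨fun α => if α = 0 then a else 0, fun α h => if_neg (by
    rintro rfl; simp at h)⟩
  map_add' a b := by ext α; by_cases h : α = 0 <;> simp [h]
  map_smul' a b := by ext α; by_cases h : α = 0 <;> simp [h]

lemma e0_mem (a : A) (ha : a ∈ Submodule.span A (Set.range K.x)) :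
    e0 A n a ∈ LinearMap.range (K.resol.D 0) := by
  rw [Submodule.mem_span_range_iff_exists_fun] at ha
  obtain ⟨c, rfl⟩ := ha
  rw [map_sum]
  refine Submodule.sum_mem _ fun j _ => ?_
  rw [map_smul]
  refine Submodule.smul_mem _ _ ?_
  refine ⟨⟨fun α => if α = Finsupp.single j 1 then 1 else 0, fun α h => if_neg ?_⟩, ?_⟩
  · rintro rfl; simp at h
  · apply Subtype.ext
    ext α
    change K.d (fun α => if α = Finsupp.single j 1 then 1 else 0) α = if α = 0 then K.x j else 0
    rw [KosData.d_apply]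
    by_cases h : α = 0
    · subst h
      simp [Finsupp.single_left_inj]
    · rw [if_neg h]
      refine Finset.sum_eq_zero fun i _ => ?_
      rw [if_neg, zero_mul]
      intro h'
      apply h
      have := congrArg Finsupp.degree h'
      rw [map_add] at this
      simp at this
      exact (Finsupp.degree_eq_zero_iff _).1 this

lemma exists_ip (hx : ∀ j, counit (K.x j) = 0) (t : A) (ht : counit t = 1)
    (hat : ∀ a, a * t - counit a • t ∈ Submodule.span A (Set.range K.x)) :
    ∃ (i : trivCat k A counit ⟶ K.resol.chain.X 0) (p : K.resol.chain.X 0 ⟶ trivCat k A counit),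
      i ≫ p = 𝟙 _ := by
  letI : Module A k := Module.compHom k counit.toRingHom
  have hsm : ∀ (a : A) (c : k), a • c = counit a * c := fun _ _ => rfl
  let p' : KosData.S A n 0 →ₗ[A] k :=
    { toFun := fun w => counit (w.1 0)
      map_add' := fun w w' => by simp
      map_smul' := fun a w => by simp [hsm] }
  have hp' : LinearMap.range (K.resol.D 0) ≤ LinearMap.ker p' := by
    rintro _ ⟨z, rfl⟩
    change counit (K.d z.1 0) = 0
    rw [KosData.d_apply, map_sum]
    exact Finset.sum_eq_zero fun i _ => by rw [map_mul, hx, mul_zero]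
  have key : ∀ (a : A) (c : k), (Submodule.Quotient.mk (e0 A n ((counit a * c) • t) : K.resol.Q 0) :
      K.resol.Q 0 ⧸ LinearMap.range (K.resol.D 0)) =
      Submodule.Quotient.mk (e0 A n (a • c • t) : K.resol.Q 0) := by
    intro a c
    symm
    refine (Submodule.Quotient.eq _).2 ?_
    have h1 : a • c • t - (counit a * c) • t =
        algebraMap k A c • (a * t - counit a • t) := by
      simp only [smul_eq_mul, Algebra.smul_def, map_mul, mul_sub, mul_smul]
      rw [← mul_assoc a, ← Algebra.commutes c a, mul_assoc, mul_assoc,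
        ← mul_assoc (algebraMap k A c) (algebraMap k A (counit a)),
        ← mul_assoc (algebraMap k A (counit a)) (algebraMap k A c),
        Algebra.commutes c (algebraMap k A (counit a))]
    have h2 : e0 A n (a • c • t - (counit a * c) • t) ∈ LinearMap.range (K.resol.D 0) := by
      apply e0_mem
      rw [h1]
      exact Submodule.smul_mem _ _ (hat a)
    rw [map_sub] at h2
    exact h2
  let i' : k →ₗ[A] (K.resol.Q 0 ⧸ LinearMap.range (K.resol.D 0)) :=
    { toFun := fun c => Submodule.Quotient.mk (e0 A n (c • t) : K.resol.Q 0)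
      map_add' := fun c d => by rw [add_smul, map_add]; rfl
      map_smul' := fun a c => by
        rw [hsm, key, map_smul]
        rfl }
  refine ⟨ModuleCat.ofHom i', ModuleCat.ofHom (Submodule.liftQ _ p' hp'), ?_⟩
  have h3 : ∀ c : k, counit ((e0 A n (c • t)).1 0) = c := by
    intro c
    simp [e0, ht]
  ext c
  exact h3 c

lemma ExtAlgGen.neg' {X : ModuleCat.{0} A} {S : ∀ N : ℕ, Set (Ext X X N)} {N : ℕ} {x : Ext X X N}
    (hx : ExtAlgGen (k := k) X S N x) : ExtAlgGen (k := k) X S N (-x) := by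
  rw [← neg_one_smul k x]
  exact ExtAlgGen.smul _ hx

theorem final_of_kos (hx : ∀ j, counit (K.x j) = 0) (t : A) (ht : counit t = 1)
    (hat : ∀ a, a * t - counit a • t ∈ Submodule.span A (Set.range K.x)) :
    (∃ S : Finset (Σ N : ℕ, Ext (trivCat k A counit) (trivCat k A counit) N),
      ∀ (N : ℕ) (x : Ext (trivCat k A counit) (trivCat k A counit) N),
        ExtAlgGen (k := k) (trivCat k A counit)
          (fun N' => {y | (⟨N', y⟩ : Σ N'' : ℕ, Ext (trivCat k A counit)
            (trivCat k A counit) N'') ∈ S}) N x) ∧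
    (∀ (M : Type) [AddCommGroup M] [Module A M] [Module k M] [IsScalarTower k A M]
        [FiniteDimensional k M],
      ∃ T : Finset (Σ N : ℕ, Ext (trivCat k A counit) (ModuleCat.of A M) N),
        ∀ (N : ℕ) (x : Ext (trivCat k A counit) (ModuleCat.of A M) N),
          ExtModGen (k := k) (trivCat k A counit) (ModuleCat.of A M)
            (fun N' => {y | (⟨N', y⟩ : Σ N'' : ℕ, Ext (trivCat k A counit)
              (ModuleCat.of A M) N'') ∈ T}) N x) := by
  obtain ⟨i, p, hip⟩ := exists_ip K counit hx t ht hat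
  constructor
  · letI : Module A k := Module.compHom k counit.toRingHom
    have hsm : ∀ (a : A) (c : k), a • c = counit a * c := fun _ _ => rfl
    haveI : IsScalarTower k A k := ⟨fun c a d => by
      simp [hsm, mul_assoc]⟩
    obtain ⟨T, hT1, hT⟩ := noeth_lemma (M := k) K (trivCat k A counit) i p hip 1
    refine ⟨T, ?_⟩
    intro N
    induction N using Nat.strong_induction_on with
    | _ N ih =>
      intro x
      rcases Nat.eq_zero_or_pos N with rfl | hN
      · obtain ⟨f, rfl⟩ := (Ext.mk₀_bijective _ _).2 x
        let f' : k →ₗ[A] k := f.hom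
        have hf : f = (f' 1) • 𝟙 (trivCat k A counit) := by
          suffices h0 : ∀ d : k, f' d = counit (algebraMap k A (f' 1)) * d by
            ext d
            exact h0 d
          intro d
          have h1 : f' ((algebraMap k A d) • (1 : k) : k) =
            (algebraMap k A d) • (f' 1) := map_smul f' _ _
          rw [hsm, hsm] at h1
          simp only [AlgHom.commutes, Algebra.algebraMap_self, RingHom.id_apply, mul_one] at h1
          simp only [AlgHom.commutes, Algebra.algebraMap_self, RingHom.id_apply]
          rw [mul_comm]
          exact h1
        have h2 : Ext.mk₀ f = (f' 1) • Ext.mk₀ (𝟙 (trivCat k A counit)) := by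
          conv_lhs => rw [hf]
          exact (Ext.comp_mk₀_id _).symm
        rw [h2]
        exact ExtAlgGen.smul _ ExtAlgGen.one
      · have hx' := hT N x hN
        induction hx' using AddSubgroup.closure_induction with
        | mem e he =>
          obtain ⟨⟨b, y⟩, ht, a, r, h, rfl⟩ := he
          subst h
          have hb := hT1 _ ht
          exact ExtAlgGen.mul (ih a (by dsimp at hb ⊢; omega) r) (ExtAlgGen.of ht)
        | zero => exact ExtAlgGen.zero _
        | add x y _ _ hx hy => exact ExtAlgGen.add hx hy
        | neg x _ hx =>
          exact ExtAlgGen.neg' hx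
  · intro M _ _ _ _ _
    obtain ⟨T, -, hT⟩ := noeth_lemma (M := M) K (trivCat k A counit) i p hip 0
    refine ⟨T, fun N x => ?_⟩
    have hx' := hT N x (Nat.zero_le _)
    induction hx' using AddSubgroup.closure_induction with
    | mem e he =>
      obtain ⟨⟨b, y⟩, ht, a, r, h, rfl⟩ := he
      subst h
      exact ExtModGen.act r (ExtModGen.of ht)
    | zero => exact ExtModGen.zero _
    | add x y _ _ hx hy => exact ExtModGen.add hx hy
    | neg x _ hx =>
      rw [← neg_one_smul k x]
      exact ExtModGen.smul _ hx

end Final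

section CoalgBasics
open Coalgebra LinearMap

variable {k : Type} [Field k] {A : Type} [Ring A] [Algebra k A] [FiniteDimensional k A]
  [Coalgebra k A]

/-- convolution -/
noncomputable def cv {R : Type} [Ring R] [Algebra k R] (f g : A →ₗ[k] R) : A →ₗ[k] R :=
  mul' k R ∘ₗ TensorProduct.map f g ∘ₗ comul

lemma cv_eq {R : Type} [Ring R] [Algebra k R] (f g : A →ₗ[k] R) :
    WithConv.toConv (cv f g) = WithConv.toConv f * WithConv.toConv g := rfl

lemma cv_assoc {R : Type} [Ring R] [Algebra k R] (f g h : A →ₗ[k] R) :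
    cv (cv f g) h = cv f (cv g h) := by
  apply WithConv.toConv_injective
  simp only [cv_eq, mul_assoc]

lemma cv_add {R : Type} [Ring R] [Algebra k R] (f g h : A →ₗ[k] R) :
    cv f (g + h) = cv f g + cv f h := by
  apply WithConv.toConv_injective
  simp only [cv_eq, mul_add, WithConv.toConv_add]

lemma add_cv {R : Type} [Ring R] [Algebra k R] (f g h : A →ₗ[k] R) :
    cv (f + g) h = cv f h + cv g h := by
  apply WithConv.toConv_injective
  simp only [cv_eq, add_mul, WithConv.toConv_add]

lemma cv_neg {R : Type} [Ring R] [Algebra k R] (f g : A →ₗ[k] R) :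
    cv f (-g) = - cv f g := by
  apply WithConv.toConv_injective
  simp only [cv_eq, mul_neg, WithConv.toConv_neg]

lemma neg_cv {R : Type} [Ring R] [Algebra k R] (f g : A →ₗ[k] R) :
    cv (-f) g = - cv f g := by
  apply WithConv.toConv_injective
  simp only [cv_eq, neg_mul, WithConv.toConv_neg]

/-- the unit of the convolution algebra -/
noncomputable def cu (R : Type) [Ring R] [Algebra k R] : A →ₗ[k] R :=
  Algebra.linearMap k R ∘ₗ counit

lemma cu_eq {R : Type} [Ring R] [Algebra k R] :
    WithConv.toConv (cu (k := k) (A := A) R) = 1 := rfl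

lemma cu_cv {R : Type} [Ring R] [Algebra k R] (f : A →ₗ[k] R) : cv (cu R) f = f := by
  apply WithConv.toConv_injective
  simp only [cv_eq, cu_eq, one_mul]

lemma cv_cu {R : Type} [Ring R] [Algebra k R] (f : A →ₗ[k] R) : cv f (cu R) = f := by
  apply WithConv.toConv_injective
  simp only [cv_eq, cu_eq, mul_one]

/-- right slice of a tensor -/
noncomputable def rs {B : Type} [AddCommGroup B] [Module k B] (f : A →ₗ[k] k) :
    B ⊗[k] A →ₗ[k] B :=
  (TensorProduct.rid k B).toLinearMap ∘ₗ TensorProduct.map LinearMap.id f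

/-- left slice of a tensor -/
noncomputable def ls {B : Type} [AddCommGroup B] [Module k B] (f : A →ₗ[k] k) :
    A ⊗[k] B →ₗ[k] B :=
  (TensorProduct.lid k B).toLinearMap ∘ₗ TensorProduct.map f LinearMap.id

lemma rs_tmul {B : Type} [AddCommGroup B] [Module k B] (f : A →ₗ[k] k) (b : B) (a : A) :
    rs f (b ⊗ₜ a) = f a • b := by simp [rs]
lemma ls_tmul {B : Type} [AddCommGroup B] [Module k B] (f : A →ₗ[k] k) (b : B) (a : A) :
    ls f (a ⊗ₜ b) = f a • b := by simp [ls]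

/-- `a' f(a'')` -/
noncomputable def rho (f : A →ₗ[k] k) : A →ₗ[k] A := rs f ∘ₗ comul
/-- `f(a') a''` -/
noncomputable def lam (f : A →ₗ[k] k) : A →ₗ[k] A := ls f ∘ₗ comul

variable (k A) in
/-- a basis -/
noncomputable def bs := Module.finBasis k A

variable (k A) in
/-- dual basis -/
noncomputable def bd (i : Fin (Module.finrank k A)) : A →ₗ[k] k := (bs k A).coord i

lemma bs_sum (a : A) : ∑ i, bd k A i a • bs k A i = a := (bs k A).sum_repr a

lemma rs_sum (T : A ⊗[k] A) : ∑ i, rs (bd k A i) T ⊗ₜ bs k A i = T := by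
  induction T using TensorProduct.induction_on with
  | zero => simp
  | tmul x y =>
    simp only [rs_tmul, TensorProduct.smul_tmul]
    rw [← TensorProduct.tmul_sum, bs_sum]
  | add x y hx hy =>
    simp only [map_add, TensorProduct.add_tmul, Finset.sum_add_distrib, hx, hy]

lemma ls_sum (T : A ⊗[k] A) : ∑ i, bs k A i ⊗ₜ ls (bd k A i) T = T := by
  induction T using TensorProduct.induction_on with
  | zero => simp
  | tmul x y =>
    simp only [ls_tmul, ← TensorProduct.smul_tmul]
    rw [← TensorProduct.sum_tmul, bs_sum]
  | add x y hx hy =>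
    simp only [map_add, TensorProduct.tmul_add, Finset.sum_add_distrib, hx, hy]

lemma rs_ext {S T : A ⊗[k] A} (h : ∀ f, rs f S = rs f T) : S = T := by
  rw [← rs_sum S, ← rs_sum T]; simp only [h]

lemma rho_sum (a : A) : (comul a : A ⊗[k] A) = ∑ i, rho (bd k A i) a ⊗ₜ bs k A i :=
  (rs_sum _).symm
lemma lam_sum (a : A) : (comul a : A ⊗[k] A) = ∑ i, bs k A i ⊗ₜ lam (bd k A i) a :=
  (ls_sum _).symm

lemma rs_map {B C : Type} [AddCommGroup B] [Module k B] [AddCommGroup C] [Module k C]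
   (p : B →ₗ[k] C) (q : A →ₗ[k] A) (f : A →ₗ[k] k) (T : B ⊗[k] A) :
    rs f (TensorProduct.map p q T) = p (rs (f ∘ₗ q) T) := by
  induction T using TensorProduct.induction_on with
  | zero => simp
  | tmul x y => simp [rs_tmul]
  | add x y hx hy => simp only [map_add, hx, hy]

lemma ls_map {B C : Type} [AddCommGroup B] [Module k B] [AddCommGroup C] [Module k C]
   (p : B →ₗ[k] C) (q : A →ₗ[k] A) (f : A →ₗ[k] k) (T : A ⊗[k] B) :
    ls f (TensorProduct.map q p T) = p (ls (f ∘ₗ q) T) := by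
  induction T using TensorProduct.induction_on with
  | zero => simp
  | tmul x y => simp [ls_tmul]
  | add x y hx hy => simp only [map_add, hx, hy]

lemma map_rs_sum {B C : Type} [AddCommGroup B] [Module k B] [AddCommGroup C] [Module k C]
    (p : A →ₗ[k] B) (q : A →ₗ[k] A) (r : A →ₗ[k] C) (T : A ⊗[k] A) :
    TensorProduct.map p (r ∘ₗ q) T = ∑ i, p (rs (bd k A i ∘ₗ q) T) ⊗ₜ r (bs k A i) := by
  have h : TensorProduct.map p (r ∘ₗ q) T
      = TensorProduct.map LinearMap.id r (TensorProduct.map p q T) := by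
    rw [← LinearMap.comp_apply, ← TensorProduct.map_comp, LinearMap.id_comp]
  have h2 : TensorProduct.map p (r ∘ₗ q) T
      = TensorProduct.map p r (TensorProduct.map LinearMap.id q T) := by
    rw [← LinearMap.comp_apply, ← TensorProduct.map_comp, LinearMap.comp_id]
  rw [h2, ← rs_sum (TensorProduct.map LinearMap.id q T)]
  simp only [map_sum, TensorProduct.map_tmul, rs_map, LinearMap.id_apply]

lemma map_ls_sum {B C : Type} [AddCommGroup B] [Module k B] [AddCommGroup C] [Module k C]
    (p : A →ₗ[k] B) (q : A →ₗ[k] A) (r : A →ₗ[k] C) (T : A ⊗[k] A) :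
    TensorProduct.map (p ∘ₗ q) r T = ∑ i, p (bs k A i) ⊗ₜ r (ls (bd k A i ∘ₗ q) T) := by
  have h2 : TensorProduct.map (p ∘ₗ q) r T
      = TensorProduct.map p r (TensorProduct.map q LinearMap.id T) := by
    rw [← LinearMap.comp_apply, ← TensorProduct.map_comp, LinearMap.comp_id]
  rw [h2, ← ls_sum (TensorProduct.map q LinearMap.id T)]
  simp only [map_sum, TensorProduct.map_tmul, ls_map, LinearMap.id_apply]

lemma cv_rho {R : Type} [Ring R] [Algebra k R] (f g : A →ₗ[k] R) (q : A →ₗ[k] A) (a : A) :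
    cv f (g ∘ₗ q) a = ∑ i, f (rho (bd k A i ∘ₗ q) a) * g (bs k A i) := by
  simp only [cv, LinearMap.comp_apply]
  rw [map_rs_sum]; simp [rho]

lemma cv_lam {R : Type} [Ring R] [Algebra k R] (f g : A →ₗ[k] R) (q : A →ₗ[k] A) (a : A) :
    cv (f ∘ₗ q) g a = ∑ i, f (bs k A i) * g (lam (bd k A i ∘ₗ q) a) := by
  simp only [cv, LinearMap.comp_apply]
  rw [map_ls_sum]; simp [lam]

lemma cv_rho1 {R : Type} [Ring R] [Algebra k R] (f g : A →ₗ[k] R) (a : A) :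
    cv f g a = ∑ i, f (rho (bd k A i) a) * g (bs k A i) := by
  have := cv_rho f g LinearMap.id a
  simpa using this

lemma cv_lam1 {R : Type} [Ring R] [Algebra k R] (f g : A →ₗ[k] R) (a : A) :
    cv f g a = ∑ i, f (bs k A i) * g (lam (bd k A i) a) := by
  have := cv_lam f g LinearMap.id a
  simpa using this

lemma apply_rho (f g : A →ₗ[k] k) (a : A) : g (rho f a) = cv g f a := by
  simp only [rho, cv, LinearMap.comp_apply]
  generalize (comul a : A ⊗[k] A) = T
  induction T using TensorProduct.induction_on with
  | zero => simp
  | tmul x y => simp [rs_tmul, mul_comm]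
  | add x y hx hy => simp only [map_add, hx, hy]

lemma apply_lam (f g : A →ₗ[k] k) (a : A) : g (lam f a) = cv f g a := by
  simp only [lam, cv, LinearMap.comp_apply]
  generalize (comul a : A ⊗[k] A) = T
  induction T using TensorProduct.induction_on with
  | zero => simp
  | tmul x y => simp [ls_tmul, mul_comm]
  | add x y hx hy => simp only [map_add, hx, hy]

lemma dual_ext {a b : A} (h : ∀ f : A →ₗ[k] k, f a = f b) : a = b :=
  sub_eq_zero.1 ((Module.forall_dual_apply_eq_zero_iff k _).1 (fun f => by
    rw [map_sub, h, sub_self]))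

lemma rho_rho (f g : A →ₗ[k] k) (a : A) : rho f (rho g a) = rho (cv f g) a := by
  apply dual_ext (k := k); intro h
  rw [apply_rho, apply_rho, apply_rho, cv_assoc]

lemma lam_rho (f g : A →ₗ[k] k) (a : A) : lam f (rho g a) = rho g (lam f a) := by
  apply dual_ext (k := k); intro h
  rw [apply_rho, apply_lam, apply_rho, apply_lam, cv_assoc]

lemma lam_lam (f g : A →ₗ[k] k) (a : A) : lam f (lam g a) = lam (cv g f) a := by
  apply dual_ext (k := k); intro h
  rw [apply_lam, apply_lam, apply_lam, cv_assoc]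

lemma rho_counit (a : A) : rho (counit (R := k) (A := A)) a = a := by
  apply dual_ext (k := k); intro h
  rw [apply_rho]; exact congrArg (fun q => q a) (cv_cu h)

lemma lam_counit (a : A) : lam (counit (R := k) (A := A)) a = a := by
  apply dual_ext (k := k); intro h
  rw [apply_lam]; exact congrArg (fun q => q a) (cu_cv h)

lemma rho_add (f g : A →ₗ[k] k) : rho (f + g) = rho f + rho g := by
  ext a; apply dual_ext (k := k); intro h; simp [apply_rho, cv_add]
lemma rho_neg (f : A →ₗ[k] k) : rho (-f) = -rho f := by
  ext a; apply dual_ext (k := k); intro h; simp [apply_rho, cv_neg]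
lemma rho_sub (f g : A →ₗ[k] k) : rho (f - g) = rho f - rho g := by
  rw [sub_eq_add_neg, rho_add, rho_neg, sub_eq_add_neg]
lemma rho_smul (c : k) (f : A →ₗ[k] k) : rho (c • f) = c • rho f := by
  ext a; simp only [rho, rs, LinearMap.comp_apply, LinearMap.smul_apply, TensorProduct.map_smul_right]; simp
lemma lam_add (f g : A →ₗ[k] k) : lam (f + g) = lam f + lam g := by
  ext a; apply dual_ext (k := k); intro h; simp [apply_lam, add_cv]
lemma lam_neg (f : A →ₗ[k] k) : lam (-f) = -lam f := by
  ext a; apply dual_ext (k := k); intro h; simp [apply_lam, neg_cv]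

/-- conv. with a scalar valued map on the right -/
lemma cv_scalar (f : A →ₗ[k] A) (g : A →ₗ[k] k) (a : A) :
    cv f (Algebra.linearMap k A ∘ₗ g) a = f (rho g a) := by
  simp only [rho, cv, LinearMap.comp_apply]
  generalize (comul a : A ⊗[k] A) = T
  induction T using TensorProduct.induction_on with
  | zero => simp
  | tmul x y => simp [rs_tmul, ← Algebra.smul_def, ← Algebra.commutes]
  | add x y hx hy => simp only [map_add, hx, hy]

end CoalgBasics

open Coalgebra in
/-- working form of the axioms of a cocommutative Hopf superalgebra -/
structure SH (k : Type) [Field k] (A : Type) [Ring A] [Algebra k A] [Coalgebra k A] where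
  s : A →ₐ[k] A
  ss : ∀ a, s (s a) = a
  e : A →ₐ[k] k
  e_eq : ∀ a, e a = counit (R := k) a
  es : ∀ a, e (s a) = e a
  ch : A →ₗ[k] A
  chs : ∀ a, ch (s a) = s (ch a)
  anti_l : cv ch LinearMap.id = cu A
  anti_r : cv LinearMap.id ch = cu A
  ds : ∀ a, (comul (s a) : A ⊗[k] A) = TensorProduct.map s.toLinearMap s.toLinearMap (comul a)
  d1 : (comul (1 : A) : A ⊗[k] A) = 1 ⊗ₜ 1
  m1 : ∀ a b : A, TensorProduct.map LinearMap.id s.toLinearMap (comul a) = (comul a : A ⊗[k] A) →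
    (comul (a * b) : A ⊗[k] A) = comul a * comul b
  m1' : ∀ a b : A, TensorProduct.map s.toLinearMap LinearMap.id (comul b) = (comul b : A ⊗[k] A) →
    (comul (a * b) : A ⊗[k] A) = comul a * comul b
  m2 : ∀ a x : A, s x = - x → (comul x : A ⊗[k] A) = x ⊗ₜ 1 + 1 ⊗ₜ x →
    (comul (a * x) : A ⊗[k] A) =
      TensorProduct.map (LinearMap.mulRight k x) s.toLinearMap (comul a) +
      TensorProduct.map LinearMap.id (LinearMap.mulRight k x) (comul a)
  cocomm : ∀ a : A, (2 : k) • TensorProduct.comm k A A (comul a) =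
    (comul a : A ⊗[k] A) + TensorProduct.map s.toLinearMap LinearMap.id (comul a)
      + TensorProduct.map LinearMap.id s.toLinearMap (comul a)
      - TensorProduct.map s.toLinearMap s.toLinearMap (comul a)

section Struct
open Coalgebra LinearMap

variable {k : Type} [Field k] [CharZero k] {A : Type} [Ring A] [Algebra k A]
  [FiniteDimensional k A] [Coalgebra k A] (S : SH k A)

namespace SH

/-- the parity automorphism as a linear map -/
noncomputable abbrev sl : A →ₗ[k] A := S.s.toLinearMap

lemma sl_apply (a : A) : S.sl a = S.s a := rfl
lemma sl_sl : S.sl ∘ₗ S.sl = LinearMap.id := by ext a; exact S.ss a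

/-- even projection -/
noncomputable def e0 : A →ₗ[k] A := (1 / 2 : k) • (LinearMap.id + S.sl)
/-- odd projection -/
noncomputable def e1 : A →ₗ[k] A := (1 / 2 : k) • (LinearMap.id - S.sl)

lemma e0_apply (a : A) : S.e0 a = (1 / 2 : k) • (a + S.s a) := rfl
lemma e1_apply (a : A) : S.e1 a = (1 / 2 : k) • (a - S.s a) := rfl

lemma s_e0 (a : A) : S.s (S.e0 a) = S.e0 a := by
  rw [e0_apply, map_smul, map_add, S.ss, add_comm]
lemma s_e1 (a : A) : S.s (S.e1 a) = - S.e1 a := by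
  rw [e1_apply, map_smul, map_sub, S.ss, ← smul_neg, neg_sub]
lemma e0_s (a : A) : S.e0 (S.s a) = S.e0 a := by
  rw [e0_apply, e0_apply, S.ss, add_comm]
lemma e1_s (a : A) : S.e1 (S.s a) = - S.e1 a := by
  rw [e1_apply, e1_apply, S.ss, ← smul_neg, neg_sub]

lemma half_add {M : Type} [AddCommGroup M] [Module k M] (a : M) : (1 / 2 : k) • (a + a) = a := by
  rw [← two_smul k a, smul_smul]; norm_num

lemma e0_even {a : A} (h : S.s a = a) : S.e0 a = a := by
  rw [e0_apply, h, half_add]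
lemma e1_even {a : A} (h : S.s a = a) : S.e1 a = 0 := by
  rw [e1_apply, h, sub_self, smul_zero]
lemma e0_odd {a : A} (h : S.s a = -a) : S.e0 a = 0 := by
  rw [e0_apply, h, add_neg_cancel, smul_zero]
lemma e1_odd {a : A} (h : S.s a = -a) : S.e1 a = a := by
  rw [e1_apply, h, sub_neg_eq_add, half_add]
lemma e0_e1 (a : A) : S.e0 a + S.e1 a = a := by
  rw [e0_apply, e1_apply, ← smul_add]
  rw [show a + S.s a + (a - S.s a) = a + a by abel, half_add]

/-- odd functional -/
def Odd' (f : A →ₗ[k] k) : Prop := f ∘ₗ S.sl = -f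
/-- even functional -/
def Ev' (f : A →ₗ[k] k) : Prop := f ∘ₗ S.sl = f

lemma cv_sl {R : Type} [Ring R] [Algebra k R] (f g : A →ₗ[k] R) :
    cv f g ∘ₗ S.sl = cv (f ∘ₗ S.sl) (g ∘ₗ S.sl) := by
  ext a
  simp only [cv, LinearMap.comp_apply, AlgHom.toLinearMap_apply, S.ds]
  congr 1
  rw [TensorProduct.map_comp]; rfl

lemma rho_s (f : A →ₗ[k] k) (a : A) : rho f (S.s a) = S.s (rho (f ∘ₗ S.sl) a) := by
  simp only [rho, LinearMap.comp_apply, S.ds, rs_map]; rfl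

lemma lam_s (f : A →ₗ[k] k) (a : A) : lam f (S.s a) = S.s (lam (f ∘ₗ S.sl) a) := by
  simp only [lam, LinearMap.comp_apply, S.ds, ls_map]; rfl

/-- the even sub Hopf algebra -/
noncomputable def H : Submodule k A :=
  LinearMap.ker (TensorProduct.map LinearMap.id S.sl ∘ₗ comul - (comul : A →ₗ[k] A ⊗[k] A))

lemma mem_H {a : A} : a ∈ S.H ↔
    TensorProduct.map LinearMap.id S.sl (comul a) = (comul a : A ⊗[k] A) := by
  simp [H, LinearMap.mem_ker, sub_eq_zero]

lemma eq_zero_of_neg {M : Type} [AddCommGroup M] [Module k M] {a : M} (h : a = -a) : a = 0 := by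
  rw [← half_add (k := k) a]; nth_rewrite 1 [h]; simp

lemma mem_H' {a : A} : a ∈ S.H ↔ ∀ g, S.Odd' g → rho g a = 0 := by
  rw [mem_H]
  constructor
  · intro h g hg
    apply eq_zero_of_neg (k := k)
    have := congrArg (rs g) h
    rw [rs_map, hg] at this
    have h2 : rho (-g) a = rho g a := this
    rw [rho_neg] at h2
    exact h2.symm
  · intro h
    apply rs_ext
    intro f
    rw [rs_map]
    change rho (f ∘ₗ S.sl) a = rho f a
    rw [← sub_eq_zero, ← LinearMap.sub_apply, ← rho_sub]
    apply h
    unfold Odd'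
    rw [LinearMap.sub_comp, LinearMap.comp_assoc, sl_sl, LinearMap.comp_id, neg_sub]

lemma H_even {a : A} (h : a ∈ S.H) : S.s a = a := by
  have := congrArg (ls (counit (R := k) (A := A))) (S.mem_H.1 h)
  rw [ls_map, LinearMap.comp_id] at this
  change S.s (lam counit a) = lam counit a at this
  rwa [lam_counit] at this

lemma mem_H_left {a : A} (h : a ∈ S.H) :
    TensorProduct.map S.sl LinearMap.id (comul a) = (comul a : A ⊗[k] A) := by
  have h1 := S.ds a
  rw [S.H_even h] at h1
  nth_rewrite 2 [h1]
  nth_rewrite 1 [← S.mem_H.1 h]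
  rw [← LinearMap.comp_apply, ← TensorProduct.map_comp]; simp

lemma two_cancel {M : Type} [AddCommGroup M] [Module k M] {a b : M}
    (h : (2 : k) • a = (2 : k) • b) : a = b := by
  have := congrArg (fun z => (1/2 : k) • z) h
  simpa [smul_smul] using this

lemma H_cocomm {a : A} (h : a ∈ S.H) :
    TensorProduct.comm k A A (comul a) = (comul a : A ⊗[k] A) := by
  apply two_cancel (k := k)
  rw [S.cocomm, S.mem_H_left h, S.mem_H.1 h, ← S.ds, S.H_even h, two_smul]; abel

lemma H_lam {a : A} (h : a ∈ S.H) (f : A →ₗ[k] k) : lam f a ∈ S.H := by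
  rw [mem_H'] at *
  intro g hg
  rw [← lam_rho, h g hg, map_zero]

lemma one_mem_H : (1 : A) ∈ S.H := by
  rw [mem_H, S.d1]; simp

/-- congruence of conv on `H`. -/
lemma H_congr {R : Type} [Ring R] [Algebra k R] (f g g' : A →ₗ[k] R)
    (hg : ∀ h ∈ S.H, g h = g' h) {a : A} (ha : a ∈ S.H) : cv f g a = cv f g' a := by
  rw [cv_lam1, cv_lam1]
  refine Finset.sum_congr rfl fun i _ => ?_
  rw [hg _ (S.H_lam ha _)]

lemma Odd_e1 (f : A →ₗ[k] k) : S.Odd' (f ∘ₗ S.e1) := by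
  ext a; simp [e1_s]
lemma Ev_e0 (f : A →ₗ[k] k) : S.Ev' (f ∘ₗ S.e0) := by
  ext a; simp [e0_s]

/-- second filtration step -/
def F2 (a : A) : Prop := ∀ h, S.Odd' h → rho h a ∈ S.H
/-- odd part of it -/
def P (a : A) : Prop := S.F2 a ∧ S.s a = - a

lemma P_lam {a : A} (h : S.P a) {f : A →ₗ[k] k} (hf : S.Ev' f) : S.P (lam f a) := by
  refine ⟨fun g hg => ?_, ?_⟩
  · rw [← lam_rho]; exact S.H_lam (h.1 g hg) f
  · have := S.lam_s f a
    rw [hf, h.2, map_neg] at this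
    exact this.symm

/-- congruence: second map odd -/
lemma P_congr1 {R : Type} [Ring R] [Algebra k R] (f f' g : A →ₗ[k] R)
    (hf : ∀ h ∈ S.H, f h = f' h) (hg : g ∘ₗ S.e1 = g) {a : A} (ha : S.F2 a) :
    cv f g a = cv f' g a := by
  rw [← hg, cv_rho, cv_rho]
  refine Finset.sum_congr rfl fun i _ => ?_
  rw [hf _ (ha _ (S.Odd_e1 _))]

lemma P_congr2 {R : Type} [Ring R] [Algebra k R] (f g g' : A →ₗ[k] R)
    (hf : f ∘ₗ S.e0 = f) (hg : ∀ a, S.P a → g a = g' a)  {a : A} (ha : S.P a) :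
    cv f g a = cv f g' a := by
  rw [← hf, cv_lam, cv_lam]
  refine Finset.sum_congr rfl fun i _ => ?_
  rw [hg _ (S.P_lam ha (S.Ev_e0 _))]

lemma P_lam_e1 {R : Type} [Ring R] [Algebra k R] (g : A →ₗ[k] R) (hg : g ∘ₗ S.e1 = g)
    {a : A} (ha : S.P a) (f : A →ₗ[k] k) : g (lam f a) = g (lam (f ∘ₗ S.e0) a) := by
  have h1 : S.e1 (lam f a) = lam (f ∘ₗ S.e0) a := by
    have h2 : f ∘ₗ S.e0 = (1/2 : k) • (f + f ∘ₗ S.sl) := by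
      rw [e0, LinearMap.comp_smul, LinearMap.comp_add, LinearMap.comp_id]
    have h3 : S.s (lam f a) = - lam (f ∘ₗ S.sl) a := by
      have := S.lam_s (f ∘ₗ S.sl) a
      rw [ha.2, map_neg, LinearMap.comp_assoc, sl_sl, LinearMap.comp_id] at this
      exact this.symm
    rw [e1_apply, h3, h2]
    apply dual_ext (k := k); intro h
    simp only [apply_lam, map_smul, map_sub, map_neg, cv, TensorProduct.map_smul_left,
      TensorProduct.map_add_left, LinearMap.comp_apply, LinearMap.smul_apply,
      LinearMap.add_apply, map_add, sub_neg_eq_add]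
  nth_rewrite 1 [← hg]
  rw [LinearMap.comp_apply, h1]

lemma P_congr3 {R : Type} [Ring R] [Algebra k R] (f g g' : A →ₗ[k] R)
    (hg1 : g ∘ₗ S.e1 = g) (hg1' : g' ∘ₗ S.e1 = g')
    (hg : ∀ a, S.P a → g a = g' a)  {a : A} (ha : S.P a) :
    cv f g a = cv f g' a := by
  rw [cv_lam1, cv_lam1]
  refine Finset.sum_congr rfl fun i _ => ?_
  rw [S.P_lam_e1 g hg1 ha, S.P_lam_e1 g' hg1' ha, hg _ (S.P_lam ha (S.Ev_e0 _))]

end SH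
end Struct

section Struct2
open Coalgebra LinearMap

variable {k : Type} [Field k] [CharZero k] {A : Type} [Ring A] [Algebra k A]
  [FiniteDimensional k A] [Coalgebra k A] (S : SH k A)

namespace SH

/-- the projection to primitives -/
noncomputable def ppi : A →ₗ[k] A := cv (S.ch ∘ₗ S.e0) S.e1

lemma ppi_sl : S.ppi ∘ₗ S.sl = - S.ppi := by
  rw [ppi, cv_sl, ← cv_neg]
  congr 1
  · ext a; simp [e0_s]
  · ext a; simp [e1_s]

lemma comp_e1_of_sl {M : Type} [AddCommGroup M] [Module k M] (f : A →ₗ[k] M)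
    (h : f ∘ₗ S.sl = -f) : f ∘ₗ S.e1 = f := by
  ext a
  have := congrArg (fun q => q a) h
  simp only [LinearMap.comp_apply, sl_apply, LinearMap.neg_apply] at this
  rw [LinearMap.comp_apply, e1_apply, map_smul, map_sub, this, sub_neg_eq_add, half_add]

lemma ppi_e1 : S.ppi ∘ₗ S.e1 = S.ppi := S.comp_e1_of_sl _ S.ppi_sl

lemma s_cv (f g : A →ₗ[k] A) : S.sl ∘ₗ cv f g = cv (S.sl ∘ₗ f) (S.sl ∘ₗ g) := by
  ext a
  simp only [cv, LinearMap.comp_apply]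
  generalize (comul a : A ⊗[k] A) = T
  induction T using TensorProduct.induction_on with
  | zero => simp
  | tmul x y => simp
  | add x y hx hy => simp only [map_add, hx, hy]

lemma s_ppi (a : A) : S.s (S.ppi a) = - S.ppi a := by
  have h : S.sl ∘ₗ S.ppi = - S.ppi := by
    rw [ppi, s_cv, ← cv_neg]
    congr 1
    · ext a; simp [← S.chs, s_e0]
    · ext a; simp [s_e1]
  exact congrArg (fun q => q a) h

lemma id_ch {h : A} (hh : h ∈ S.H) : cv LinearMap.id (S.ch ∘ₗ S.e0) h = cu (k := k) A h := by
  rw [← S.anti_r]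
  apply S.H_congr _ _ _ _ hh
  intro g hg
  rw [LinearMap.comp_apply, S.e0_even (S.H_even hg)]

lemma id_ppi {a : A} (ha : S.P a) : cv LinearMap.id S.ppi a = a := by
  rw [ppi, ← cv_assoc, S.P_congr1 _ (cu A) _ (fun h hh => S.id_ch hh) _ ha.1, cu_cv,
    S.e1_odd ha.2]
  exact S.comp_e1_of_sl _ (by ext a; simp [e1_s])

/-- even part of the coproduct, in the tensor square -/
noncomputable def uu : A →ₗ[k] A ⊗[k] A := comul ∘ₗ S.e0
noncomputable def ub : A →ₗ[k] A ⊗[k] A := comul ∘ₗ S.ch ∘ₗ S.e0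
noncomputable def TT : A →ₗ[k] A ⊗[k] A := TensorProduct.map S.e0 S.e1 ∘ₗ comul ∘ₗ S.ppi
noncomputable def TT' : A →ₗ[k] A ⊗[k] A := (TensorProduct.mk k A A 1) ∘ₗ S.ppi

lemma map_even_mul {h : A} (hh : h ∈ S.H) (X : A ⊗[k] A) :
    (comul h : A ⊗[k] A) * TensorProduct.map S.e0 S.e1 X
      = TensorProduct.map S.e0 S.e1 ((comul h : A ⊗[k] A) * X) := by
  have h0 : (comul h : A ⊗[k] A) = TensorProduct.map S.e0 S.e0 (comul h) := by
    have hl := S.mem_H_left hh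
    have hr := S.mem_H.1 hh
    have h1 : TensorProduct.map S.e0 LinearMap.id (comul h) = (comul h : A ⊗[k] A) := by
      rw [e0, TensorProduct.map_smul_left, TensorProduct.map_add_left, LinearMap.smul_apply,
        LinearMap.add_apply, hl, TensorProduct.map_id, LinearMap.id_apply, half_add]
    have h2 : TensorProduct.map LinearMap.id S.e0 (comul h) = (comul h : A ⊗[k] A) := by
      rw [e0, TensorProduct.map_smul_right, TensorProduct.map_add_right, LinearMap.smul_apply,
        LinearMap.add_apply, hr, TensorProduct.map_id, LinearMap.id_apply, half_add]
    nth_rewrite 1 [← h1]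
    nth_rewrite 1 [← h2]
    rw [← LinearMap.comp_apply, ← TensorProduct.map_comp]; simp
  rw [h0]
  generalize (comul h : A ⊗[k] A) = T
  induction T using TensorProduct.induction_on with
  | zero => simp
  | add x y hx hy => simp only [map_add, add_mul, hx, hy]
  | tmul x y =>
    induction X using TensorProduct.induction_on with
    | zero => simp
    | add x y hx hy => simp only [map_add, mul_add, hx, hy]
    | tmul z w =>
      simp only [TensorProduct.map_tmul, Algebra.TensorProduct.tmul_mul_tmul]
      congr 1
      · rw [e0_apply _ (_ * _), map_mul, s_e0, ← mul_add, ← mul_smul_comm, ← e0_apply]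
      · rw [e1_apply _ (_ * _), map_mul, s_e0, ← mul_sub, ← mul_smul_comm, ← e1_apply]

lemma uu_TT {a : A} (ha : S.P a) : cv S.uu S.TT a = TensorProduct.map S.e0 S.e1 (comul a) := by
  have hT : S.TT ∘ₗ S.e1 = S.TT := by
    rw [TT, LinearMap.comp_assoc, LinearMap.comp_assoc, ppi_e1]
  rw [← hT, cv_rho]
  have hi := S.id_ppi ha
  rw [← S.ppi_e1, cv_rho] at hi
  refine Eq.trans ?_ (congrArg (fun z => TensorProduct.map S.e0 S.e1 (comul (R := k) z)) hi)
  rw [map_sum, map_sum]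
  refine Finset.sum_congr rfl fun i _ => ?_
  have hm := ha.1 _ (S.Odd_e1 (bd k A i))
  rw [LinearMap.id_apply, S.m1 _ _ (S.mem_H.1 hm), ← S.map_even_mul hm]
  rw [uu, TT, LinearMap.comp_apply, S.e0_even (S.H_even hm)]; rfl

lemma uu_TT' {a : A} (ha : S.P a) : cv S.uu S.TT' a = TensorProduct.map S.e0 S.e1 (comul a) := by
  have hT : S.TT' ∘ₗ S.e1 = S.TT' := by
    rw [TT', LinearMap.comp_assoc, ppi_e1]
  have h1 : cv S.uu S.TT' a
      = cv (TensorProduct.map S.e0 LinearMap.id ∘ₗ comul) S.TT' a := by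
    apply S.P_congr1 _ _ _ _ hT ha.1
    intro h hh
    rw [uu, LinearMap.comp_apply, LinearMap.comp_apply, S.e0_even (S.H_even hh), e0,
      TensorProduct.map_smul_left, TensorProduct.map_add_left, LinearMap.smul_apply,
        LinearMap.add_apply, S.mem_H_left hh, TensorProduct.map_id, LinearMap.id_apply, half_add]
  have h2 : cv (TensorProduct.map S.e0 LinearMap.id ∘ₗ comul) S.TT'
      = TensorProduct.map S.e0 (cv LinearMap.id S.ppi) ∘ₗ comul := by
    have key : ∀ T : (A ⊗[k] A) ⊗[k] A,
        mul' k (A ⊗[k] A) (TensorProduct.map (TensorProduct.map S.e0 LinearMap.id) S.TT' T)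
        = TensorProduct.map S.e0 (mul' k A ∘ₗ TensorProduct.map LinearMap.id S.ppi)
            (TensorProduct.assoc k A A A T) := by
      intro T
      induction T using TensorProduct.induction_on with
      | zero => simp
      | add x y hx hy => simp only [map_add, hx, hy]
      | tmul x y =>
        induction x using TensorProduct.induction_on with
        | zero => simp
        | add x y hx hy => simp only [map_add, TensorProduct.add_tmul, hx, hy]
        | tmul z w => simp [TT']
    ext b
    have := key ((TensorProduct.map comul LinearMap.id) (comul b))
    have h3 := Coalgebra.coassoc_apply (R := k) b
    simp only [LinearMap.rTensor, LinearMap.lTensor] at h3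
    rw [h3] at this
    simp only [cv, LinearMap.comp_apply]
    rw [← LinearMap.comp_apply (TensorProduct.map _ _) (TensorProduct.map _ _), ←
      TensorProduct.map_comp, ← LinearMap.comp_apply (TensorProduct.map _ _) (TensorProduct.map _ _), ←
      TensorProduct.map_comp] at this
    simp only [LinearMap.comp_id] at this
    exact this
  rw [h1, h2]
  have h3 := map_ls_sum (k := k) LinearMap.id S.e0 (cv LinearMap.id S.ppi) (comul a)
  have h4 := map_ls_sum (k := k) LinearMap.id S.e0 S.e1 (comul a)
  rw [LinearMap.id_comp] at h3 h4
  rw [LinearMap.comp_apply, h3, h4]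
  refine Finset.sum_congr rfl fun i _ => ?_
  congr 1
  have hP := S.P_lam ha (S.Ev_e0 (bd k A i))
  change cv LinearMap.id S.ppi (lam _ a) = S.e1 (lam _ a)
  rw [S.id_ppi hP, S.e1_odd hP.2]

lemma ub_uu {h : A} (hh : h ∈ S.H) : cv S.ub S.uu h = cu (k := k) (A ⊗[k] A) h := by
  have h1 := congrArg (fun q => comul (R := k) (q h)) S.anti_l
  simp only [cv_lam1, map_sum, cu, LinearMap.comp_apply, LinearMap.id_apply] at h1
  have h3 : cv S.ub S.uu h = cv (comul ∘ₗ S.ch) S.uu h := by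
    have : TensorProduct.map S.ub S.uu (comul h) = TensorProduct.map (comul ∘ₗ S.ch) S.uu (comul h) := by
      nth_rewrite 2 [← S.mem_H_left hh]
      have h5 : TensorProduct.map S.e0 LinearMap.id (comul h) = (comul h : A ⊗[k] A) := by
        rw [e0, TensorProduct.map_smul_left, TensorProduct.map_add_left, LinearMap.smul_apply,
        LinearMap.add_apply, S.mem_H_left hh, TensorProduct.map_id, LinearMap.id_apply, half_add]
      rw [S.mem_H_left hh]
      nth_rewrite 2 [← h5]
      rw [← LinearMap.comp_apply (TensorProduct.map _ _) (TensorProduct.map _ _), ←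
      TensorProduct.map_comp]
      rfl
    simp only [cv, LinearMap.comp_apply, this]
  rw [h3, cv_lam1]
  have h6 : (comul ((Algebra.linearMap k A) (counit h)) : A ⊗[k] A) = cu (k := k) (A ⊗[k] A) h := by
    rw [Algebra.linearMap_apply, Algebra.algebraMap_eq_smul_one, map_smul, S.d1, cu,
      LinearMap.comp_apply, Algebra.linearMap_apply, Algebra.algebraMap_eq_smul_one]; rfl
  rw [← h6, ← h1]
  refine Finset.sum_congr rfl fun i _ => ?_
  have hl := S.H_lam hh (bd k A i)
  rw [S.m1' _ _ (S.mem_H_left hl), uu, LinearMap.comp_apply, LinearMap.comp_apply,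
    S.e0_even (S.H_even hl)]

lemma TT_eq {a : A} (ha : S.P a) : S.TT a = S.TT' a := by
  have hub : S.ub ∘ₗ S.e0 = S.ub := by
    ext b; simp [ub, S.e0_even (S.s_e0 b)]
  have h1 : cv S.ub (cv S.uu S.TT) a = cv S.ub (cv S.uu S.TT') a :=
    S.P_congr2 _ _ _ hub (fun b hb => by rw [S.uu_TT hb, S.uu_TT' hb]) ha
  have hT : S.TT ∘ₗ S.e1 = S.TT := by
    rw [TT, LinearMap.comp_assoc, LinearMap.comp_assoc, ppi_e1]
  have hT' : S.TT' ∘ₗ S.e1 = S.TT' := by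
    rw [TT', LinearMap.comp_assoc, ppi_e1]
  rw [← cv_assoc, ← cv_assoc, S.P_congr1 _ (cu _) _ (fun h hh => S.ub_uu hh) hT ha.1,
    S.P_congr1 _ (cu _) _ (fun h hh => S.ub_uu hh) hT' ha.1, cu_cv, cu_cv] at h1
  exact h1

/-- odd primitives -/
noncomputable def V : Submodule k A where
  carrier := {x | S.s x = -x ∧ (comul x : A ⊗[k] A) = x ⊗ₜ 1 + 1 ⊗ₜ x}
  zero_mem' := by simp
  add_mem' := by
    rintro a b ⟨h1, h2⟩ ⟨h3, h4⟩
    refine ⟨by rw [map_add, h1, h3]; abel, ?_⟩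
    rw [map_add, h2, h4, TensorProduct.add_tmul, TensorProduct.tmul_add]; abel
  smul_mem' := by
    rintro c a ⟨h1, h2⟩
    refine ⟨by rw [map_smul, h1, smul_neg], ?_⟩
    rw [map_smul, h2, smul_add, TensorProduct.tmul_smul, TensorProduct.smul_tmul']

lemma ppi_mem {a : A} (ha : S.P a) : S.ppi a ∈ S.V := by
  have hs := S.s_ppi a
  refine ⟨hs, ?_⟩
  have hT : TensorProduct.map S.e0 S.e1 (comul (S.ppi a)) = (1 : A) ⊗ₜ[k] S.ppi a := S.TT_eq ha
  have hd := S.ds (S.ppi a)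
  rw [hs, map_neg] at hd
  have hc := S.cocomm (S.ppi a)
  set y := S.ppi a
  set D : A ⊗[k] A := comul y
  rw [← hd] at hc
  -- expand
  have e01 : TensorProduct.map S.e0 S.e1 D = (1/4 : k) • (D + TensorProduct.map S.sl LinearMap.id D
      - TensorProduct.map LinearMap.id S.sl D - TensorProduct.map S.sl S.sl D) := by
    rw [e0, e1, TensorProduct.map_smul_left, TensorProduct.map_smul_right, TensorProduct.map_add_left,
      sub_eq_add_neg LinearMap.id S.sl, TensorProduct.map_add_right, TensorProduct.map_add_right]
    have hneg : ∀ p : A →ₗ[k] A, TensorProduct.map p (-S.sl) = - TensorProduct.map p S.sl := by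
      intro p; ext u v; simp [TensorProduct.tmul_neg]
    rw [hneg, hneg]
    simp only [LinearMap.smul_apply, LinearMap.add_apply, LinearMap.neg_apply, smul_smul,
      TensorProduct.map_id, LinearMap.id_apply]
    module
  have hs1 : TensorProduct.map S.sl LinearMap.id D = - TensorProduct.map LinearMap.id S.sl D := by
    have : TensorProduct.map S.sl LinearMap.id D
       = TensorProduct.map LinearMap.id S.sl (TensorProduct.map S.sl S.sl D) := by
      rw [← LinearMap.comp_apply (TensorProduct.map _ _) (TensorProduct.map _ _), ←
      TensorProduct.map_comp, sl_sl]; rfl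
    rw [this, ← hd, map_neg]
  have hc2 : TensorProduct.comm k A A D = D := by
    apply two_cancel (k := k)
    rw [hc, hs1, two_smul]; abel
  have e01' : TensorProduct.map S.e0 S.e1 D = (1/2 : k) • (D - TensorProduct.map LinearMap.id S.sl D) := by
    rw [e01, hs1, ← hd]
    rw [show D + -TensorProduct.map LinearMap.id S.sl D - TensorProduct.map LinearMap.id S.sl D - -D
      = (2:k) • (D - TensorProduct.map LinearMap.id S.sl D) by rw [two_smul]; abel, smul_smul]
    norm_num
  have hcomm : TensorProduct.comm k A A (TensorProduct.map LinearMap.id S.sl D)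
      = TensorProduct.map S.sl LinearMap.id D := by
    have : ∀ T : A ⊗[k] A, TensorProduct.comm k A A (TensorProduct.map LinearMap.id S.sl T)
      = TensorProduct.map S.sl LinearMap.id (TensorProduct.comm k A A T) := by
      intro T
      induction T using TensorProduct.induction_on with
      | zero => simp
      | add x y hx hy => simp only [map_add, hx, hy]
      | tmul x y => simp
    rw [this, hc2]
  have h10 : y ⊗ₜ[k] (1 : A) = (1/2 : k) • (D + TensorProduct.map LinearMap.id S.sl D) := by
    have := congrArg (TensorProduct.comm k A A) (hT.symm.trans e01')
    rw [TensorProduct.comm_tmul, map_smul, map_sub, hcomm, hs1, hc2] at this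
    rw [this, sub_neg_eq_add]
  rw [h10, ← hT, e01', ← smul_add]
  rw [show D + TensorProduct.map LinearMap.id S.sl D + (D - TensorProduct.map LinearMap.id S.sl D)
    = D + D by abel, half_add]

end SH
end Struct2

section Struct3
open Coalgebra LinearMap

variable {k : Type} [Field k] [CharZero k] {A : Type} [Ring A] [Algebra k A]
  [FiniteDimensional k A] [Coalgebra k A] (S : SH k A)

namespace SH

/-- an even primitive element vanishes -/
lemma even_prim_zero [Nontrivial A] (y : A) (hs : S.s y = y)
    (hy : (comul y : A ⊗[k] A) = y ⊗ₜ 1 + 1 ⊗ₜ y) : y = 0 := by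
  by_contra hne
  have hH : y ∈ S.H := by
    rw [mem_H, hy, map_add]
    simp [hs]
  have hpow : ∀ n : ℕ, (comul (y ^ n) : A ⊗[k] A) = (y ⊗ₜ 1 + 1 ⊗ₜ y) ^ n := by
    intro n
    induction n with
    | zero => simp [S.d1, Algebra.TensorProduct.one_def]
    | succ n ih => rw [pow_succ', S.m1 _ _ (S.mem_H.1 hH), ih, hy, pow_succ']
  have hcm : Commute (y ⊗ₜ[k] (1 : A)) ((1 : A) ⊗ₜ[k] y) := by
    simp [Commute, SemiconjBy]
  have hpow2 : ∀ n : ℕ, (comul (y ^ n) : A ⊗[k] A)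
      = ∑ m ∈ Finset.range (n + 1), (n.choose m : k) • ((y ^ m) ⊗ₜ[k] (y ^ (n - m))) := by
    intro n
    rw [hpow, hcm.add_pow]
    refine Finset.sum_congr rfl fun m _ => ?_
    rw [Algebra.TensorProduct.tmul_pow, Algebra.TensorProduct.tmul_pow,
      Algebra.TensorProduct.tmul_mul_tmul, one_pow, one_pow, one_mul, mul_one, ← nsmul_eq_mul',
      Nat.cast_smul_eq_nsmul]
  have hey : S.e y = 0 := by
    have := lam_counit (k := k) y
    simp only [lam, LinearMap.comp_apply, hy, map_add, ls_tmul] at this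
    rw [← S.e_eq, ← S.e_eq, map_one, one_smul] at this
    have h2 : S.e y • (1 : A) = 0 := by simpa using this
    exact (smul_eq_zero.1 h2).resolve_right one_ne_zero
  obtain ⟨g, hg⟩ : ∃ g : A →ₗ[k] k, g y ≠ 0 := by
    by_contra hcon
    push Not at hcon
    exact hne ((Module.forall_dual_apply_eq_zero_iff k y).1 hcon)
  obtain ⟨f, hf1, hfy⟩ : ∃ f : A →ₗ[k] k, f 1 = 0 ∧ f y ≠ 0 := by
    refine ⟨g - g 1 • S.e.toLinearMap, by simp, by simpa [hey] using hg⟩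
  let W : ℕ → Submodule k A := fun m => Submodule.span k ((fun i => y ^ i) '' Set.Iio m)
  have hmemW : ∀ i m, i < m → y ^ i ∈ W m := fun i m h => Submodule.subset_span ⟨i, h, rfl⟩
  have hrho : ∀ n, rho f (y ^ (n + 1)) - ((n + 1 : k) * f y) • y ^ n ∈ W n := by
    intro n
    simp only [rho, LinearMap.comp_apply, hpow2, map_sum, map_smul, rs_tmul]
    rw [Finset.sum_range_succ, Finset.sum_range_succ]
    have : n + 1 - n = 1 := by omega
    rw [Nat.choose_self, Nat.sub_self, pow_zero, hf1, zero_smul, smul_zero, add_zero,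
      Nat.choose_succ_self_right, this, pow_one, smul_smul]
    push_cast
    rw [add_sub_cancel_right]
    refine Submodule.sum_mem _ fun i hi => ?_
    exact Submodule.smul_mem _ _ (Submodule.smul_mem _ _ (hmemW _ _ (Finset.mem_range.1 hi)))
  have hW : ∀ n, ∀ a ∈ W (n + 1), rho f a ∈ W n := by
    intro n a ha
    refine Submodule.span_induction ?_ ?_ ?_ ?_ ha
    · rintro _ ⟨i, hi, rfl⟩
      have hi' : i < n + 1 := hi
      rcases i with _ | i
      · simp only [pow_zero, rho, LinearMap.comp_apply, S.d1, rs_tmul, hf1, zero_smul]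
        exact zero_mem _
      · have := hrho i
        have h2 : rho f (y ^ (i + 1)) = (rho f (y ^ (i + 1)) - ((i + 1 : k) * f y) • y ^ i)
          + ((i + 1 : k) * f y) • y ^ i := by abel
        show rho f (y ^ (i + 1)) ∈ W n
        rw [h2]
        refine add_mem (Submodule.span_mono (Set.image_mono ?_) this)
          (Submodule.smul_mem _ _ (hmemW _ _ (by omega)))
        intro j hj
        simp only [Set.mem_Iio] at *
        omega
    · rw [map_zero]; exact zero_mem _
    · intro x z _ _ hx hz; rw [map_add]; exact add_mem hx hz
    · intro c x _ hx; rw [map_smul]; exact Submodule.smul_mem _ _ hx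
  have hnot : ∀ n, y ^ n ∉ W n := by
    intro n
    induction n with
    | zero =>
      intro h
      have : W 0 = ⊥ := by
        show Submodule.span k ((fun i => y ^ i) '' Set.Iio 0) = ⊥
        simp
      rw [this, Submodule.mem_bot, pow_zero] at h
      exact one_ne_zero h
    | succ n ih =>
      intro h
      apply ih
      have h1 := sub_mem (hW n _ h) (hrho n)
      rw [sub_sub_cancel] at h1
      have hc : ((n + 1 : k) * f y) ≠ 0 := mul_ne_zero (by exact_mod_cast Nat.succ_ne_zero n) hfy
      have h2 := Submodule.smul_mem _ ((n + 1 : k) * f y)⁻¹ h1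
      rwa [smul_smul, inv_mul_cancel₀ hc, one_smul] at h2
  -- contradiction with minimal polynomial
  have hintg : IsIntegral k y := Algebra.IsIntegral.isIntegral y
  have hmin := minpoly.aeval k y
  have hmon := minpoly.monic hintg
  rw [Polynomial.aeval_eq_sum_range, Finset.sum_range_succ] at hmin
  apply hnot (minpoly k y).natDegree
  rw [hmon.coeff_natDegree, one_smul] at hmin
  rw [eq_neg_of_add_eq_zero_right hmin]
  refine neg_mem (Submodule.sum_mem _ fun i hi => ?_)
  exact Submodule.smul_mem _ _ (hmemW _ _ (Finset.mem_range.1 hi))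

lemma V_anti {x y : A} (hx : x ∈ S.V) (hy : y ∈ S.V) : x * y + y * x = 0 := by
  cases subsingleton_or_nontrivial A
  · exact Subsingleton.elim _ _
  obtain ⟨hx1, hx2⟩ := hx
  obtain ⟨hy1, hy2⟩ := hy
  apply S.even_prim_zero
  · simp [hx1, hy1]
  · rw [map_add, S.m2 _ _ hy1 hy2, S.m2 _ _ hx1 hx2, hx2, hy2]
    simp only [map_add, TensorProduct.map_tmul, LinearMap.mulRight_apply, AlgHom.toLinearMap_apply,
      map_one, hx1, hy1, one_mul, LinearMap.id_apply, TensorProduct.tmul_neg, TensorProduct.add_tmul,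
      TensorProduct.tmul_add]
    abel

/-- number of odd generators -/
noncomputable def nn : ℕ := Module.finrank k S.V
/-- basis of `V` -/
noncomputable def xb : Module.Basis (Fin S.nn) k S.V := Module.finBasis k S.V
noncomputable def x (i : Fin S.nn) : A := (S.xb i : A)

lemma x_mem (i : Fin S.nn) : S.x i ∈ S.V := (S.xb i).2

lemma exists_v : ∃ v : A →ₗ[k] S.V, v ∘ₗ S.V.subtype = LinearMap.id :=
  S.V.subtype.exists_leftInverse_of_injective (Submodule.ker_subtype _)

noncomputable def v : A →ₗ[k] S.V := S.exists_v.choose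
lemma v_apply (a : S.V) : S.v (a : A) = a := congrArg (fun q => q a) S.exists_v.choose_spec

/-- the odd coordinate functionals -/
noncomputable def fj (j : Fin S.nn) : A →ₗ[k] k := S.xb.coord j ∘ₗ S.v ∘ₗ S.ppi

lemma fj_odd (j : Fin S.nn) : S.Odd' (S.fj j) := by
  unfold Odd' fj
  rw [LinearMap.comp_assoc, LinearMap.comp_assoc, ppi_sl]
  ext a; simp

lemma ppi_hx {h x : A} (hh : h ∈ S.H) (hx : x ∈ S.V) : S.ppi (h * x) = S.e h • x := by
  have h1 : (comul (h * x) : A ⊗[k] A) = TensorProduct.map (LinearMap.mulRight k x) LinearMap.id (comul h) +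
      TensorProduct.map LinearMap.id (LinearMap.mulRight k x) (comul h) := by
    rw [S.m2 _ _ hx.1 hx.2]
    congr 1
    nth_rewrite 2 [← S.mem_H.1 hh]
    rw [← LinearMap.comp_apply (TensorProduct.map _ _) (TensorProduct.map _ _), ←
      TensorProduct.map_comp]; rfl
  have h2 : cv S.ch LinearMap.id h = S.e h • 1 := by
    rw [S.anti_l, cu, LinearMap.comp_apply, Algebra.linearMap_apply, Algebra.algebraMap_eq_smul_one,
      S.e_eq]
  rw [cv_lam1] at h2
  rw [lam_sum h] at h1
  simp only [ppi, cv, LinearMap.comp_apply]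
  rw [h1]
  simp only [map_add, map_sum, TensorProduct.map_tmul, LinearMap.mul'_apply, LinearMap.mulRight_apply,
    LinearMap.id_apply, LinearMap.comp_apply]
  have h3 : ∀ i, S.e1 (lam (bd k A i) h) = 0 := fun i => S.e1_even (S.H_even (S.H_lam hh _))
  have h4 : ∀ i, S.e1 (lam (bd k A i) h * x) = lam (bd k A i) h * x := fun i => S.e1_odd (by
    rw [map_mul, S.H_even (S.H_lam hh _), hx.1, mul_neg])
  simp only [h3, h4, mul_zero, Finset.sum_const_zero, zero_add]
  have h5 : ∑ i, S.ch (S.e0 (bs k A i)) * lam (bd k A i) h = S.e h • 1 := by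
    rw [← h2]
    have e1 := cv_lam (R := A) S.ch LinearMap.id S.e0 h
    have e2 := cv_lam1 (R := A) S.ch LinearMap.id h
    have e3 := cv_lam1 (R := A) (S.ch ∘ₗ S.e0) LinearMap.id h
    have e4 : cv (S.ch ∘ₗ S.e0) LinearMap.id h = cv S.ch LinearMap.id h := by
      have h5 : TensorProduct.map S.e0 LinearMap.id (comul h) = (comul h : A ⊗[k] A) := by
        rw [e0, TensorProduct.map_smul_left, TensorProduct.map_add_left, LinearMap.smul_apply,
        LinearMap.add_apply, S.mem_H_left hh, TensorProduct.map_id, LinearMap.id_apply, half_add]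
      simp only [cv, LinearMap.comp_apply]
      nth_rewrite 2 [← h5]
      rw [← LinearMap.comp_apply (TensorProduct.map _ _) (TensorProduct.map _ _), ←
      TensorProduct.map_comp]; rfl
    rw [e3, e2] at e4
    exact e4
  simp only [← mul_assoc]
  rw [← Finset.sum_mul, h5, smul_mul_assoc, one_mul]

lemma fj_hx {h : A} (hh : h ∈ S.H) (i j : Fin S.nn) :
    S.fj j (h * S.x i) = if i = j then S.e h else 0 := by
  simp only [fj, LinearMap.comp_apply]
  rw [S.ppi_hx hh (S.x_mem i), map_smul, map_smul]
  have : S.v (S.x i) = S.xb i := S.v_apply _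
  rw [this, Module.Basis.coord_apply, Module.Basis.repr_self, Finsupp.single_apply]
  simp

/-- Euler operator -/
noncomputable def E (a : A) : A := ∑ j, rho (S.fj j) a * S.x j

lemma E_P {a : A} (ha : S.P a) : S.E a = a := by
  have h1 : cv LinearMap.id (S.V.subtype ∘ₗ S.v ∘ₗ S.ppi) a = cv LinearMap.id S.ppi a := by
    apply S.P_congr3 _ _ _ _ S.ppi_e1 _ ha
    · rw [LinearMap.comp_assoc, LinearMap.comp_assoc, ppi_e1]
    · intro b hb
      have := S.v_apply ⟨_, S.ppi_mem hb⟩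
      simp only [LinearMap.comp_apply]
      simp only at this
      rw [this]; rfl
  rw [S.id_ppi ha] at h1
  rw [E]
  nth_rewrite 2 [← h1]
  rw [cv_rho1]
  have h2 : ∀ j, rho (S.fj j) a = ∑ i, S.fj j (bs k A i) • rho (bd k A i) a := by
    intro j
    simp only [rho, LinearMap.comp_apply]
    conv_lhs => rw [rho_sum a, map_sum]
    simp only [rs_tmul]; rfl
  have h3 : ∀ b, (S.V.subtype ∘ₗ S.v ∘ₗ S.ppi) b = ∑ j, S.fj j b • S.x j := by
    intro b
    simp only [LinearMap.comp_apply, fj, x, Submodule.subtype_apply]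
    have := congrArg (S.V.subtype) (S.xb.sum_repr (S.v (S.ppi b)))
    rw [map_sum] at this
    simp only [map_smul] at this
    exact this.symm
  simp only [h2, h3, Finset.sum_mul, Finset.mul_sum, LinearMap.id_apply]
  rw [Finset.sum_comm]
  simp only [smul_mul_assoc, mul_smul_comm]

end SH
end Struct3

section Struct4
open Coalgebra LinearMap

variable {k : Type} [Field k] [CharZero k] {A : Type} [Ring A] [Algebra k A]
  [FiniteDimensional k A] [Coalgebra k A] (S : SH k A)

namespace SH

variable (k A) in
/-- the dual algebra -/
def O := WithConv (A →ₗ[k] k)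

noncomputable instance : Ring (O k A) := inferInstanceAs (Ring (WithConv (A →ₗ[k] k)))
noncomputable instance : Algebra k (O k A) := inferInstanceAs (Algebra k (WithConv (A →ₗ[k] k)))

/-- underlying functional -/
def O.ofConv (f : O k A) : A →ₗ[k] k := WithConv.ofConv f
/-- functional as an element of the dual algebra -/
def O.toConv (f : A →ₗ[k] k) : O k A := WithConv.toConv f
lemma O.ofConv_injective : Function.Injective (O.ofConv (k := k) (A := A)) :=
  WithConv.ofConv_injective
lemma O.ofConv_add (f g : O k A) : (f + g).ofConv = f.ofConv + g.ofConv := rfl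
lemma O.ofConv_sub (f g : O k A) : (f - g).ofConv = f.ofConv - g.ofConv := rfl
lemma O.ofConv_zero : (0 : O k A).ofConv = 0 := rfl
lemma O.ofConv_toConv (f : A →ₗ[k] k) : (O.toConv f).ofConv = f := rfl
variable (k A) in
/-- the identification -/
noncomputable def O.linearEquiv : O k A ≃ₗ[k] (A →ₗ[k] k) where
  toFun := O.ofConv
  invFun := O.toConv
  map_add' _ _ := rfl
  map_smul' _ _ := rfl
  left_inv _ := rfl
  right_inv _ := rfl
lemma O.ofConv_sum {ι : Type} (s : Finset ι) (f : ι → O k A) :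
    (∑ i ∈ s, f i).ofConv = ∑ i ∈ s, (f i).ofConv := map_sum (O.linearEquiv k A) f s
instance : FiniteDimensional k (O k A) :=
  LinearEquiv.finiteDimensional (O.linearEquiv k A).symm

lemma O_mul (f g : O k A) : (f * g).ofConv = cv f.ofConv g.ofConv := rfl
lemma O_one : (1 : O k A).ofConv = cu k := rfl

lemma O_ext {f g : O k A} (h : ∀ a, f.ofConv a = g.ofConv a) : f = g := by
  apply O.ofConv_injective
  ext a; exact h a

/-- parity on functionals -/
noncomputable def so (g : O k A) : O k A := O.toConv (g.ofConv ∘ₗ S.sl)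

/-- odd functionals -/
noncomputable def O1 : Submodule k (O k A) where
  carrier := {f | S.Odd' f.ofConv}
  zero_mem' := by
    show S.Odd' 0
    unfold Odd'; simp
  add_mem' := by
    intro f g hf hg
    show (f.ofConv + g.ofConv) ∘ₗ S.sl = -(f.ofConv + g.ofConv)
    have hf : f.ofConv ∘ₗ S.sl = _ := hf
    have hg : g.ofConv ∘ₗ S.sl = _ := hg
    rw [LinearMap.add_comp, hf, hg, neg_add]
  smul_mem' := by
    intro c f hf
    show (c • f.ofConv) ∘ₗ S.sl = -(c • f.ofConv)
    have hf : f.ofConv ∘ₗ S.sl = _ := hf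
    rw [LinearMap.smul_comp, hf, smul_neg]

lemma super_comm {f : O k A} (hf : f ∈ S.O1) (g : O k A) : g * f = f * S.so g := by
  have hf : f.ofConv ∘ₗ S.sl = - f.ofConv := hf
  apply O_ext
  intro a
  rw [O_mul, O_mul]
  have hc := S.cocomm a
  have h1 := congrArg (fun T => mul' k k (TensorProduct.map f.ofConv g.ofConv T)) hc
  have hflip : ∀ T : A ⊗[k] A, mul' k k (TensorProduct.map f.ofConv g.ofConv (TensorProduct.comm k A A T))
      = mul' k k (TensorProduct.map g.ofConv f.ofConv T) := by
    intro T
    induction T using TensorProduct.induction_on with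
    | zero => simp
    | add x y hx hy => simp only [map_add, hx, hy]
    | tmul x y => simp [mul_comm]
  simp only [map_smul, map_add, map_sub, hflip] at h1
  simp only [← LinearMap.comp_apply (TensorProduct.map _ _) (TensorProduct.map _ _), ←
      TensorProduct.map_comp, LinearMap.comp_id, hf] at h1
  have hn : ∀ g : A →ₗ[k] k, mul' k k (TensorProduct.map (-f.ofConv) g (comul a))
     = - mul' k k (TensorProduct.map (f.ofConv) g (comul a)) := by
    intro g
    have := congrArg (fun q => q a) (neg_cv f.ofConv g)
    exact this
  simp only [hn] at h1
  apply two_cancel (k := k)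
  change (2 : k) • mul' k k (TensorProduct.map g.ofConv f.ofConv (comul a)) = (2 : k) •
    mul' k k (TensorProduct.map f.ofConv (g.ofConv ∘ₗ S.sl) (comul a))
  rw [h1]; module

lemma so_so (g : O k A) : S.so (S.so g) = g := by
  apply O_ext; intro a
  simp [so, S.ss, O.ofConv_toConv]

lemma top_comm : (⊤ : Submodule k (O k A)) * S.O1 = S.O1 * ⊤ := by
  apply le_antisymm
  · rw [Submodule.mul_le]
    intro g _ f hf
    rw [S.super_comm hf]
    exact Submodule.mul_mem_mul hf trivial
  · rw [Submodule.mul_le]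
    intro f hf g _
    have := S.super_comm hf (S.so g)
    rw [so_so] at this
    rw [← this]
    exact Submodule.mul_mem_mul trivial hf

/-- the filtration of the dual -/
noncomputable def K (m : ℕ) : Submodule k (O k A) := ⊤ * S.O1 ^ m

lemma top_top : (⊤ : Submodule k (O k A)) * ⊤ = ⊤ := by
  rw [eq_top_iff]
  intro f _
  rw [← one_mul f]
  exact Submodule.mul_mem_mul trivial trivial

lemma K_mul (m n : ℕ) : S.K m * S.K n = S.K (m + n) := by
  have h : Commute (S.O1 ^ m) (⊤ : Submodule k (O k A)) :=
    Commute.pow_left (show S.O1 * ⊤ = ⊤ * S.O1 from S.top_comm.symm) m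
  rw [K, K, K, mul_assoc, ← mul_assoc (S.O1 ^ m), h.eq, mul_assoc, ← pow_add, ← mul_assoc, top_top]

lemma K_succ (m : ℕ) : S.K (m + 1) = S.K m * S.O1 := by
  rw [K, K, pow_succ, mul_assoc]

lemma K_zero : S.K 0 = ⊤ := by rw [K, pow_zero, mul_one]

lemma O1_sq {f : O k A} (hf : f ∈ S.O1) : f * f = 0 := by
  have h := S.super_comm hf f
  have h2 : S.so f = - f := by
    apply O_ext; intro a
    have hf : f.ofConv ∘ₗ S.sl = - f.ofConv := hf
    exact congrArg (fun q => q a) hf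
  rw [h2, mul_neg] at h
  exact eq_zero_of_neg (k := k) h

lemma K_nil : ∃ L, S.K L = ⊥ := by
  let φ : ExteriorAlgebra k S.O1 →ₐ[k] O k A :=
    ExteriorAlgebra.lift k ⟨S.O1.subtype, fun f => S.O1_sq f.2⟩
  have hr : (LinearMap.range (ExteriorAlgebra.ι k : S.O1 →ₗ[k] _)).map φ.toLinearMap = S.O1 := by
    rw [← LinearMap.range_comp]
    have : φ.toLinearMap ∘ₗ ExteriorAlgebra.ι k = S.O1.subtype := by
      ext f; simp [φ]
    rw [this, Submodule.range_subtype]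
  let L := Module.finrank k S.O1 + 1
  refine ⟨L, ?_⟩
  have h0 : (LinearMap.range (ExteriorAlgebra.ι k : S.O1 →ₗ[k] _)) ^ L = ⊥ := by
    have h1 : Module.finrank k (⋀[k]^L S.O1) = 0 := by
      rw [exteriorPower.finrank_eq]
      exact Nat.choose_eq_zero_of_lt (Nat.lt_succ_self _)
    have := Submodule.finrank_eq_zero.1 h1
    exact this
  have h2 : S.O1 ^ L = ⊥ := by
    rw [← hr, ← Submodule.map_pow, h0, Submodule.map_bot]
  rw [K, h2, Submodule.mul_bot]

/-- the filtration -/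
noncomputable def F (m : ℕ) : Submodule k A :=
  Submodule.dualCoannihilator ((S.K m).map (O.linearEquiv k A).toLinearMap)

lemma mem_F {m : ℕ} {a : A} : a ∈ S.F m ↔ ∀ f ∈ S.K m, f.ofConv a = 0 := by
  rw [F, Submodule.mem_dualCoannihilator]
  constructor
  · intro h f hf
    exact h _ ⟨f, hf, rfl⟩
  · rintro h _ ⟨f, hf, rfl⟩
    exact h f hf

lemma mem_K {m : ℕ} {f : O k A} : f ∈ S.K m ↔ ∀ a ∈ S.F m, f.ofConv a = 0 := by
  constructor
  · intro h a ha
    exact S.mem_F.1 ha f h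
  · intro h
    have h1 : f.ofConv ∈ (S.F m).dualAnnihilator := by
      rw [Submodule.mem_dualAnnihilator]; exact h
    rw [F, Subspace.dualCoannihilator_dualAnnihilator_eq] at h1
    obtain ⟨g, hg, hgf⟩ := h1
    rwa [← O.ofConv_injective hgf]

lemma F_zero : S.F 0 = ⊥ := by
  rw [eq_bot_iff]
  intro a ha
  rw [mem_F, K_zero] at ha
  rw [Submodule.mem_bot]
  exact (Module.forall_dual_apply_eq_zero_iff k a).1 fun f => ha (O.toConv f) trivial

lemma F_top : ∃ L, S.F L = ⊤ := by
  obtain ⟨L, hL⟩ := S.K_nil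
  refine ⟨L, ?_⟩
  rw [eq_top_iff]
  intro a _
  rw [mem_F, hL]
  intro f hf
  rw [(Submodule.mem_bot k).1 hf]; rfl

lemma F_one : S.F 1 = S.H := by
  ext a
  rw [mem_F, mem_H']
  constructor
  · intro h g hg
    refine (Module.forall_dual_apply_eq_zero_iff k _).1 fun f => ?_
    rw [apply_rho]
    refine h (O.toConv f * O.toConv g) ?_
    rw [K, pow_one]
    exact Submodule.mul_mem_mul trivial hg
  · intro h f hf
    rw [K, pow_one] at hf
    induction hf using Submodule.mul_induction_on' with
    | mem_mul_mem f _ g hg =>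
      rw [O_mul, ← apply_rho, h _ hg, map_zero]
    | add x _ y _ hx hy =>
      rw [O.ofConv_add, LinearMap.add_apply, hx, hy, add_zero]

lemma rho_F {m n : ℕ} {a : A} (ha : a ∈ S.F (m + n)) {g : O k A} (hg : g ∈ S.K n) :
    rho g.ofConv a ∈ S.F m := by
  rw [mem_F] at *
  intro f hf
  rw [apply_rho, ← O_mul]
  apply ha
  rw [← K_mul]
  exact Submodule.mul_mem_mul hf hg

lemma F2_of_mem {a : A} (ha : a ∈ S.F 2) : S.F2 a := by
  intro g hg
  rw [← F_one]
  refine S.rho_F (m := 1) (n := 1) ha (g := O.toConv g) ?_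
  rw [K, pow_one, ← one_mul (O.toConv g)]
  exact Submodule.mul_mem_mul trivial hg

/-- right translation on functionals -/
noncomputable def X (i : Fin S.nn) (f : O k A) : O k A :=
  O.toConv (f.ofConv ∘ₗ LinearMap.mulRight k (S.x i))
noncomputable def fo (j : Fin S.nn) : O k A := O.toConv (S.fj j)

lemma fo_mem (j : Fin S.nn) : S.fo j ∈ S.O1 := S.fj_odd j

lemma X_mul (i : Fin S.nn) (f g : O k A) : S.X i (f * g) = S.X i f * S.so g + f * S.X i g := by
  apply O_ext
  intro a
  have h := S.m2 a (S.x i) (S.x_mem i).1 (S.x_mem i).2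
  rw [O.ofConv_add, LinearMap.add_apply, O_mul, O_mul]
  simp only [X, so, O_mul, O.ofConv_toConv, LinearMap.comp_apply, LinearMap.mulRight_apply, cv, h, map_add]
  simp only [← LinearMap.comp_apply (TensorProduct.map _ _) (TensorProduct.map _ _), ←
      TensorProduct.map_comp, LinearMap.comp_id]

/-- the Euler derivation -/
noncomputable def D (f : O k A) : O k A := ∑ j, S.X j f * S.fo j

lemma D_apply (f : O k A) (a : A) : (S.D f).ofConv a = f.ofConv (S.E a) := by
  rw [D, O.ofConv_sum, LinearMap.sum_apply, E, map_sum]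
  refine Finset.sum_congr rfl fun j _ => ?_
  rw [O_mul, ← apply_rho]; rfl

lemma D_mul (f g : O k A) : S.D (f * g) = S.D f * g + f * S.D g := by
  simp only [D, Finset.sum_mul, Finset.mul_sum, ← Finset.sum_add_distrib]
  refine Finset.sum_congr rfl fun j _ => ?_
  rw [X_mul, add_mul, mul_assoc, mul_assoc, mul_assoc]
  congr 2
  rw [S.super_comm (S.fo_mem j), so_so]

lemma D_K_one (f : O k A) : S.D f ∈ S.K 1 := by
  rw [K, pow_one]
  exact Submodule.sum_mem _ fun j _ => Submodule.mul_mem_mul trivial (S.fo_mem j)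

lemma E_s (a : A) : S.E (S.s a) = S.s (S.E a) := by
  rw [E, E, map_sum]
  refine Finset.sum_congr rfl fun j _ => ?_
  have := S.fj_odd j
  unfold Odd' at this
  rw [rho_s, map_mul, (S.x_mem j).1, this, rho_neg, LinearMap.neg_apply, map_neg]
  simp

lemma E_add (a b : A) : S.E (a + b) = S.E a + S.E b := by
  simp [E, add_mul, Finset.sum_add_distrib]
lemma E_smul (c : k) (a : A) : S.E (c • a) = c • S.E a := by
  simp [E, Finset.smul_sum]

lemma so_mem_K {f : O k A} {m : ℕ} (hf : f ∈ S.K m) : S.so f ∈ S.K m := by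
  let T : O k A →ₗ[k] O k A :=
    { toFun := S.so
      map_add' := fun f g => rfl
      map_smul' := fun c f => rfl }
  have hT : ∀ f g, S.so (f * g) = S.so f * S.so g := by
    intro f g
    apply O.ofConv_injective
    exact S.cv_sl f.ofConv g.ofConv
  induction m generalizing f with
  | zero => rw [K_zero]; trivial
  | succ m ih =>
    rw [K_succ] at *
    induction hf using Submodule.mul_induction_on' with
    | mem_mul_mem f hf g hg =>
      rw [hT]
      refine Submodule.mul_mem_mul (ih hf) ?_
      have hg' : g.ofConv ∘ₗ S.sl = - g.ofConv := hg
      have : S.so g = -g := by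
        apply O.ofConv_injective; exact hg'
      rw [this]; exact neg_mem hg
    | add x _ y _ hx hy => exact add_mem hx hy

lemma s_mem_F {a : A} {m : ℕ} (ha : a ∈ S.F m) : S.s a ∈ S.F m := by
  rw [mem_F] at *
  intro f hf
  exact ha _ (S.so_mem_K hf)

lemma D_O1 {g : O k A} (hg : g ∈ S.O1) : S.D g - g ∈ S.K 2 := by
  rw [mem_K]
  intro a ha
  rw [O.ofConv_sub, LinearMap.sub_apply, D_apply, sub_eq_zero]
  have hg' : g.ofConv ∘ₗ S.sl = - g.ofConv := hg
  have hge := S.comp_e1_of_sl _ hg'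
  have h1 : S.e1 (S.E a) = S.E (S.e1 a) := by
    rw [e1_apply, e1_apply, E_smul, sub_eq_add_neg, sub_eq_add_neg, E_add, ← E_s]
    congr 2
    have := S.E_smul (-1) (S.s a)
    simp only [neg_smul, one_smul] at this
    exact this.symm
  have h2 : S.e1 a ∈ S.F 2 := by
    rw [e1_apply]
    exact Submodule.smul_mem _ _ (sub_mem ha (S.s_mem_F ha))
  rw [← hge, LinearMap.comp_apply, LinearMap.comp_apply, h1, S.E_P ⟨S.F2_of_mem h2, S.s_e1 a⟩]

lemma D_add (f g : O k A) : S.D (f + g) = S.D f + S.D g := by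
  apply O_ext; intro a
  rw [D_apply, O.ofConv_add, O.ofConv_add, LinearMap.add_apply, LinearMap.add_apply,
    D_apply, D_apply]

lemma D_K {m : ℕ} {f : O k A} (hf : f ∈ S.K m) : S.D f - (m : k) • f ∈ S.K (m + 1) := by
  induction m generalizing f with
  | zero => simpa using S.D_K_one f
  | succ m ih =>
    rw [K_succ] at hf
    induction hf using Submodule.mul_induction_on' with
    | mem_mul_mem f hf g hg =>
      have h : S.D (f * g) - ((m + 1 : ℕ) : k) • (f * g)
        = (S.D f - (m : k) • f) * g + f * (S.D g - g) := by
        rw [D_mul, sub_mul, mul_sub, smul_mul_assoc]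
        push_cast
        rw [add_smul, one_smul]
        abel
      rw [h]
      refine add_mem ?_ ?_
      · rw [K_succ]; exact Submodule.mul_mem_mul (ih hf) hg
      · rw [show m + 1 + 1 = m + 2 from rfl, ← K_mul]
        exact Submodule.mul_mem_mul hf (S.D_O1 hg)
    | add x _ y _ hx hy =>
      have h : S.D (x + y) - ((m + 1 : ℕ) : k) • (x + y)
        = (S.D x - ((m + 1 : ℕ) : k) • x) + (S.D y - ((m + 1 : ℕ) : k) • y) := by
        rw [D_add, smul_add]; abel
      rw [h]; exact add_mem hx hy

lemma E_F {m : ℕ} {a : A} (ha : a ∈ S.F (m + 1)) : S.E a - (m : k) • a ∈ S.F m := by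
  rw [mem_F]
  intro f hf
  have := S.mem_F.1 ha _ (S.D_K hf)
  rw [O.ofConv_sub, LinearMap.sub_apply, D_apply] at this
  rw [map_sub, map_smul]
  exact this

lemma X_fo (i j : Fin S.nn) : S.X i (S.fo j) - (if i = j then 1 else 0) ∈ S.K 1 := by
  rw [mem_K]
  intro a ha
  rw [F_one] at ha
  rw [O.ofConv_sub, LinearMap.sub_apply]
  have h1 : (S.X i (S.fo j)).ofConv a = if i = j then S.e a else 0 := S.fj_hx ha i j
  rw [h1]
  split_ifs with h
  · rw [O_one, cu]; simp [S.e_eq]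
  · simp [O.ofConv_zero]

/-- the Koszul data -/
noncomputable def kos : KosData k A S.nn where
  x := S.x
  anti i j := S.V_anti (S.x_mem i) (S.x_mem j)
  pd j := rho (S.fj j)
  M i j := rho (S.X i (S.fo j)).ofConv
  pd_mul i j a := by
    have h := S.m2 a (S.x i) (S.x_mem i).1 (S.x_mem i).2
    have ho := S.fj_odd j
    unfold Odd' at ho
    have h1 : rho (S.fj j) (a * S.x i) = rho (-S.fj j) a * S.x i + rho (S.X i (S.fo j)).ofConv a := by
      simp only [rho, LinearMap.comp_apply]
      rw [h, map_add, rs_map, rs_map, ho]; rfl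
    rw [h1, rho_neg, LinearMap.neg_apply]; noncomm_ring
  F := S.F
  F_zero := S.F_zero
  F_top := S.F_top
  M_F i j m a ha := by
    have := S.rho_F (m := m) (n := 1) ha (S.X_fo i j)
    rw [O.ofConv_sub, rho_sub, LinearMap.sub_apply] at this
    convert this using 2
    split_ifs with h
    · have h2 := rho_counit (k := k) a
      rw [O_one]; exact h2.symm
    · have : rho (0 : A →ₗ[k] k) a = 0 := by
        apply dual_ext (k := k); intro g; rw [apply_rho]; simp [cv]
      exact this.symm
  pd_F m a ha := S.E_F ha

end SH
end Struct4

section Struct5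
open Coalgebra LinearMap

variable {k : Type} [Field k] [CharZero k] {A : Type} [Ring A] [Algebra k A]
  [FiniteDimensional k A] [Coalgebra k A] (S : SH k A)

namespace SH

/-- trace functional -/
noncomputable def trf : (A →ₗ[k] k) →ₗ[k] k where
  toFun f := LinearMap.trace k A (rho f)
  map_add' f g := by rw [rho_add, map_add]
  map_smul' c f := by rw [rho_smul, map_smul]; rfl

/-- the integral before normalisation -/
noncomputable def t0 : A := (Module.evalEquiv k A).symm (trf (k := k) (A := A))

lemma t0_apply (f : A →ₗ[k] k) : f (t0 (k := k) (A := A)) = LinearMap.trace k A (rho f) := by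
  have := Module.apply_evalEquiv_symm_apply k A f (trf (k := k) (A := A))
  exact this

lemma t0_counit : S.e (t0 (k := k) (A := A)) = Module.finrank k A := by
  have h := t0_apply (k := k) (A := A) S.e.toLinearMap
  have h2 : rho S.e.toLinearMap = LinearMap.id := by
    ext a
    have : S.e.toLinearMap = (counit : A →ₗ[k] k) := by ext b; exact S.e_eq b
    rw [this, rho_counit]; rfl
  rw [h2, LinearMap.trace_id] at h
  exact h

lemma t0_even : S.s (t0 (k := k) (A := A)) = t0 (k := k) (A := A) := by
  apply dual_ext (k := k)
  intro f
  change (f ∘ₗ S.sl) _ = _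
  rw [t0_apply, t0_apply]
  have h : rho (f ∘ₗ S.sl) = S.sl ∘ₗ (rho f ∘ₗ S.sl) := by
    ext a
    simp only [LinearMap.comp_apply]
    rw [sl_apply, sl_apply, rho_s, S.ss]
  rw [h]
  change LinearMap.trace k A (S.sl * (rho f ∘ₗ S.sl)) = _
  rw [LinearMap.trace_mul_comm]
  change LinearMap.trace k A ((rho f ∘ₗ S.sl) ∘ₗ S.sl) = _
  rw [LinearMap.comp_assoc, sl_sl, LinearMap.comp_id]

lemma rho_translate {h : A} (hh : h ∈ S.H) (f : A →ₗ[k] k) :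
    rho (f ∘ₗ LinearMap.mulLeft k h) = ∑ i, LinearMap.mulLeft k (S.ch (bs k A i)) ∘ₗ
      (rho f ∘ₗ LinearMap.mulLeft k (lam (bd k A i) h)) := by
  ext c
  -- formula for `rho f (g * c)`
  have h1 : ∀ g ∈ S.H, rho f (g * c) = ∑ j, rho (f ∘ₗ LinearMap.mulRight k (bs k A j)) g *
      rho (bd k A j) c := by
    intro g hg
    simp only [rho, LinearMap.comp_apply]
    rw [S.m1 _ _ (S.mem_H.1 hg)]
    conv_lhs => rw [rho_sum c]
    rw [Finset.mul_sum, map_sum]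
    refine Finset.sum_congr rfl fun j _ => ?_
    generalize (comul g : A ⊗[k] A) = T
    change _ = _ * rho (bd k A j) c
    induction T using TensorProduct.induction_on with
    | zero => simp
    | add x y hx hy => simp only [map_add, add_mul, hx, hy]
    | tmul x y => simp [rs_tmul]
  have h2 : ∀ g : A →ₗ[k] k, ∑ i, S.ch (bs k A i) * rho g (lam (bd k A i) h) = g h • 1 := by
    intro g
    have e1 : cv S.ch (rho g) = Algebra.linearMap k A ∘ₗ g := by
      have e2 : rho g = cv LinearMap.id (Algebra.linearMap k A ∘ₗ g) := by
        ext a; rw [cv_scalar]; rfl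
      rw [e2, ← cv_assoc, S.anti_l, cu_cv]
    have e3 := congrArg (fun q => q h) e1
    simp only [cv_lam1] at e3
    rw [e3, LinearMap.comp_apply, Algebra.linearMap_apply, Algebra.algebraMap_eq_smul_one]
  rw [LinearMap.sum_apply]
  simp only [LinearMap.comp_apply, LinearMap.mulLeft_apply]
  have h3 : ∀ i, S.ch (bs k A i) * rho f (lam (bd k A i) h * c) = 
      ∑ j, (S.ch (bs k A i) * rho (f ∘ₗ LinearMap.mulRight k (bs k A j)) (lam (bd k A i) h)) *
      rho (bd k A j) c := by
    intro i
    rw [h1 _ (S.H_lam hh _), Finset.mul_sum]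
    simp only [mul_assoc]
  simp only [h3]
  rw [Finset.sum_comm]
  simp only [← Finset.sum_mul, h2, smul_mul_assoc, one_mul]
  simp only [rho, LinearMap.comp_apply]
  conv_lhs => rw [rho_sum c]
  rw [map_sum]
  simp only [rs_tmul]; rfl

lemma t0_left {h : A} (hh : h ∈ S.H) : h * t0 (k := k) (A := A) = S.e h • t0 (k := k) (A := A) := by
  apply dual_ext (k := k)
  intro f
  change (f ∘ₗ LinearMap.mulLeft k h) _ = _
  rw [map_smul, t0_apply, t0_apply, S.rho_translate hh, map_sum]
  have h1 : ∀ i, LinearMap.trace k A (LinearMap.mulLeft k (S.ch (bs k A i)) ∘ₗ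
      (rho f ∘ₗ LinearMap.mulLeft k (lam (bd k A i) h)))
      = LinearMap.trace k A (rho f ∘ₗ LinearMap.mulLeft k (lam (bd k A i) h * S.ch (bs k A i))) := by
    intro i
    have := LinearMap.trace_mul_comm k (LinearMap.mulLeft k (S.ch (bs k A i)))
      (rho f ∘ₗ LinearMap.mulLeft k (lam (bd k A i) h))
    refine Eq.trans this ?_
    congr 1
    ext a
    simp [mul_assoc]
  simp only [h1]
  rw [← map_sum]
  have h2 : ∑ i, lam (bd k A i) h * S.ch (bs k A i) = S.e h • 1 := by
    have e1 := S.H_cocomm hh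
    have e2 := congrArg (fun q => q h) S.anti_r
    simp only [cv, LinearMap.comp_apply] at e2
    rw [← e1, lam_sum h] at e2
    simp only [map_sum, TensorProduct.comm_tmul, TensorProduct.map_tmul, LinearMap.mul'_apply,
      LinearMap.id_apply] at e2
    rw [e2, cu, LinearMap.comp_apply, Algebra.linearMap_apply, Algebra.algebraMap_eq_smul_one, S.e_eq]
  have h3 : ∑ i, rho f ∘ₗ LinearMap.mulLeft k (lam (bd k A i) h * S.ch (bs k A i))
      = S.e h • rho f := by
    ext a
    simp only [LinearMap.sum_apply, LinearMap.comp_apply, LinearMap.mulLeft_apply,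
      LinearMap.smul_apply]
    rw [← map_sum, ← Finset.sum_mul, h2, smul_mul_assoc, one_mul, map_smul]
  rw [h3, map_smul]

lemma A_eq (a : A) : ∃ h ∈ S.H, a - h ∈ Submodule.span A (Set.range S.x) := by
  have key : ∀ m, ∀ a ∈ S.F (m + 1), ∃ h ∈ S.H, a - h ∈ Submodule.span A (Set.range S.x) := by
    intro m
    induction m with
    | zero =>
      intro a ha
      rw [zero_add, F_one] at ha
      exact ⟨a, ha, by rw [sub_self]; exact zero_mem _⟩
    | succ m ih =>
      intro a ha
      have h1 := S.E_F ha
      obtain ⟨h, hh, h2⟩ := ih _ h1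
      have hE : S.E a ∈ Submodule.span A (Set.range S.x) :=
        Submodule.sum_mem _ fun j _ => Submodule.smul_mem _ _ (Submodule.subset_span ⟨j, rfl⟩)
      have hc : ((m + 1 : ℕ) : k) ≠ 0 := by exact_mod_cast Nat.succ_ne_zero m
      refine ⟨-(((m + 1 : ℕ) : k)⁻¹ • h), neg_mem (Submodule.smul_mem _ _ hh), ?_⟩
      have h3 := sub_mem hE h2
      have h4 := Submodule.smul_mem _ (algebraMap k A (((m + 1 : ℕ) : k)⁻¹)) h3
      convert h4 using 1
      rw [smul_eq_mul, ← Algebra.smul_def]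
      rw [show S.E a - (S.E a - ((m + 1 : ℕ) : k) • a - h) = ((m + 1 : ℕ) : k) • a + h by abel,
        smul_add, smul_smul, inv_mul_cancel₀ hc, one_smul, sub_neg_eq_add]
  obtain ⟨L, hL⟩ := S.F_top
  cases L with
  | zero =>
    rw [F_zero] at hL
    have : a ∈ (⊥ : Submodule k A) := by rw [hL]; trivial
    rw [Submodule.mem_bot] at this
    exact ⟨0, zero_mem _, by rw [this, sub_zero]; exact zero_mem _⟩
  | succ L => exact key L a (by rw [hL]; trivial)

lemma s_span {a : A} (ha : a ∈ Submodule.span A (Set.range S.x)) :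
    S.s a ∈ Submodule.span A (Set.range S.x) := by
  refine Submodule.span_induction ?_ ?_ ?_ ?_ ha
  · rintro _ ⟨i, rfl⟩
    rw [(S.x_mem i).1]; exact neg_mem (Submodule.subset_span ⟨i, rfl⟩)
  · rw [map_zero]; exact zero_mem _
  · intro x y _ _ hx hy; rw [map_add]; exact add_mem hx hy
  · intro c x _ hx; rw [smul_eq_mul, map_mul]; exact Submodule.smul_mem _ _ hx

lemma odd_mem {a : A} (ha : S.s a = -a) : a ∈ Submodule.span A (Set.range S.x) := by
  obtain ⟨h, hh, h1⟩ := S.A_eq a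
  have h2 := sub_mem h1 (S.s_span h1)
  rw [map_sub, ha, S.H_even hh] at h2
  have h3 := Submodule.smul_mem _ (algebraMap k A (1/2)) h2
  convert h3 using 1
  rw [smul_eq_mul, ← Algebra.smul_def, show a - h - (-a - h) = a + a by abel, half_add]

lemma e_x (i : Fin S.nn) : S.e (S.x i) = 0 := by
  apply eq_zero_of_neg (k := k)
  have := S.es (S.x i)
  rw [(S.x_mem i).1, map_neg] at this
  exact this.symm

lemma hat (a : A) : a * t0 (k := k) (A := A) - S.e a • t0 (k := k) (A := A)
    ∈ Submodule.span A (Set.range S.x) := by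
  have h0 : ∀ b ∈ Submodule.span A (Set.range S.x),
      b * t0 (k := k) (A := A) ∈ Submodule.span A (Set.range S.x) ∧ S.e b = 0 := by
    intro b hb
    refine Submodule.span_induction ?_ ?_ ?_ ?_ hb
    · rintro _ ⟨i, rfl⟩
      exact ⟨S.odd_mem (by rw [map_mul, t0_even, (S.x_mem i).1, neg_mul]), S.e_x i⟩
    · rw [zero_mul, map_zero]; exact ⟨zero_mem _, rfl⟩
    · rintro x y _ _ ⟨hx, hx'⟩ ⟨hy, hy'⟩
      rw [add_mul, map_add, hx', hy', add_zero]; exact ⟨add_mem hx hy, rfl⟩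
    · rintro c x _ ⟨hx, hx'⟩
      rw [smul_eq_mul, map_mul, hx', mul_zero, mul_assoc]
      exact ⟨Submodule.smul_mem _ _ hx, rfl⟩
  obtain ⟨h, hh, h1⟩ := S.A_eq a
  obtain ⟨h2, h3⟩ := h0 _ h1
  rw [map_sub, sub_eq_zero] at h3
  rw [h3, ← S.t0_left hh, ← sub_mul]
  exact h2

lemma final : ∃ t : A, S.e t = 1 ∧
    ∀ a, a * t - S.e a • t ∈ Submodule.span A (Set.range S.kos.x) := by
  haveI : Nontrivial A := by
    refine ⟨0, 1, fun h => ?_⟩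
    have := congrArg S.e h
    rw [map_zero, map_one] at this
    exact zero_ne_one this
  have hd : (Module.finrank k A : k) ≠ 0 := by
    exact_mod_cast Module.finrank_pos.ne'
  refine ⟨(Module.finrank k A : k)⁻¹ • t0 (k := k) (A := A), ?_, ?_⟩
  · rw [map_smul, t0_counit, smul_eq_mul, inv_mul_cancel₀ hd]
  · intro a
    have := Submodule.smul_mem _ (algebraMap k A ((Module.finrank k A : k)⁻¹)) (S.hat a)
    change _ ∈ Submodule.span A (Set.range S.x)
    convert this using 1
    rw [smul_eq_mul, ← Algebra.smul_def, smul_sub, mul_smul_comm, smul_comm]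

end SH
end Struct5

section Bridge

variable {k : Type} [Field k] {A : Type} [Ring A] [Algebra k A]
variable (𝒜 : ZMod 2 → Submodule k A) [GradedAlgebra 𝒜]

lemma par_decomp (a : A) : ∃ a0 ∈ 𝒜 0, ∃ a1 ∈ 𝒜 1, a = a0 + a1 := by
  classical
  refine ⟨_, SetLike.coe_mem (DirectSum.decompose 𝒜 a 0), _,
    SetLike.coe_mem (DirectSum.decompose 𝒜 a 1), ?_⟩
  have h : a = ∑ i : ZMod 2, ((DirectSum.decompose 𝒜 a i : 𝒜 i) : A) := by
    conv_lhs => rw [← DirectSum.sum_support_decompose 𝒜 a]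
    refine Finset.sum_subset (Finset.subset_univ _) ?_
    intro i _ hi
    rw [DFinsupp.notMem_support_iff] at hi
    rw [hi]; rfl
  exact h.trans (Fin.sum_univ_two (M := A) (fun i : Fin 2 =>
    ((DirectSum.decompose 𝒜 a (i : ZMod 2) : 𝒜 (i : ZMod 2)) : A)))

/-- the parity map as a linear map -/
noncomputable def parL : A →ₗ[k] A :=
  (𝒜 0).subtype ∘ₗ (DirectSum.component k (ZMod 2) (fun i => 𝒜 i) 0) ∘ₗ
      (DirectSum.decomposeLinearEquiv 𝒜).toLinearMap -
    (𝒜 1).subtype ∘ₗ (DirectSum.component k (ZMod 2) (fun i => 𝒜 i) 1) ∘ₗ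
      (DirectSum.decomposeLinearEquiv 𝒜).toLinearMap

lemma parL_apply (a : A) : parL 𝒜 a =
    (DirectSum.decompose 𝒜 a 0 : A) - (DirectSum.decompose 𝒜 a 1 : A) := rfl

lemma parL_zero {a : A} (ha : a ∈ 𝒜 0) : parL 𝒜 a = a := by
  rw [parL_apply, DirectSum.decompose_of_mem_same 𝒜 ha,
    DirectSum.decompose_of_mem_ne 𝒜 ha (by decide), sub_zero]

lemma parL_one {a : A} (ha : a ∈ 𝒜 1) : parL 𝒜 a = -a := by
  rw [parL_apply, DirectSum.decompose_of_mem_same 𝒜 ha,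
    DirectSum.decompose_of_mem_ne 𝒜 ha (by decide), zero_sub]

lemma mem_mul {i j l : ZMod 2} (h : i + j = l) {a b : A} (ha : a ∈ 𝒜 i) (hb : b ∈ 𝒜 j) :
    a * b ∈ 𝒜 l := h ▸ SetLike.mul_mem_graded ha hb

/-- the parity automorphism -/
noncomputable def par : A →ₐ[k] A :=
  AlgHom.ofLinearMap (parL 𝒜) (parL_zero 𝒜 (SetLike.one_mem_graded 𝒜)) (by
    intro a b
    obtain ⟨a0, ha0, a1, ha1, rfl⟩ := par_decomp 𝒜 a
    obtain ⟨b0, hb0, b1, hb1, rfl⟩ := par_decomp 𝒜 b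
    simp only [mul_add, add_mul, map_add]
    rw [parL_zero 𝒜 (mem_mul 𝒜 (add_zero 0) ha0 hb0),
      parL_one 𝒜 (mem_mul 𝒜 (zero_add 1) ha0 hb1),
      parL_one 𝒜 (mem_mul 𝒜 (add_zero 1) ha1 hb0),
      parL_zero 𝒜 (mem_mul 𝒜 (by decide) ha1 hb1),
      parL_zero 𝒜 ha0, parL_zero 𝒜 hb0, parL_one 𝒜 ha1, parL_one 𝒜 hb1]
    noncomm_ring)

lemma par_zero {a : A} (ha : a ∈ 𝒜 0) : par 𝒜 a = a := parL_zero 𝒜 ha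
lemma par_one {a : A} (ha : a ∈ 𝒜 1) : par 𝒜 a = -a := parL_one 𝒜 ha

lemma sg00 : (-1 : ℤˣ) ^ ((0 : ZMod 2) * 0) = 1 := by decide
lemma sg01 : (-1 : ℤˣ) ^ ((0 : ZMod 2) * 1) = 1 := by decide
lemma sg10 : (-1 : ℤˣ) ^ ((1 : ZMod 2) * 0) = 1 := by decide
lemma sg11 : (-1 : ℤˣ) ^ ((1 : ZMod 2) * 1) = -1 := by decide

/-- product of graded tensor product, transported -/
noncomputable def gm (u v : A ⊗[k] A) : A ⊗[k] A :=
  (GradedTensorProduct.of k 𝒜 𝒜).symm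
    (GradedTensorProduct.of k 𝒜 𝒜 u * GradedTensorProduct.of k 𝒜 𝒜 v)

lemma gm_add_left (u u' v : A ⊗[k] A) : gm 𝒜 (u + u') v = gm 𝒜 u v + gm 𝒜 u' v := by
  simp only [gm, map_add, add_mul]
lemma gm_add_right (u v v' : A ⊗[k] A) : gm 𝒜 u (v + v') = gm 𝒜 u v + gm 𝒜 u v' := by
  simp only [gm, map_add, mul_add]

lemma gm_hom {i j : ZMod 2} (a b c d : A) (hb : b ∈ 𝒜 j) (hc : c ∈ 𝒜 i) :
    gm 𝒜 (a ⊗ₜ b) (c ⊗ₜ d) = (-1 : ℤˣ) ^ (j * i) • ((a * c) ⊗ₜ[k] (b * d)) := by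
  have := GradedTensorProduct.tmul_coe_mul_coe_tmul (R := k) 𝒜 𝒜 a ⟨b, hb⟩ ⟨c, hc⟩ d
  exact this

lemma gm_form [CharZero k] (u v : A ⊗[k] A) : (2 : k) • gm 𝒜 u v =
    u * v + u * TensorProduct.map (par 𝒜).toLinearMap LinearMap.id v
      + TensorProduct.map LinearMap.id (par 𝒜).toLinearMap u * v
      - TensorProduct.map LinearMap.id (par 𝒜).toLinearMap u *
        TensorProduct.map (par 𝒜).toLinearMap LinearMap.id v := by
  induction u using TensorProduct.induction_on with
  | zero => simp [gm]
  | add u u' h h' =>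
    rw [gm_add_left, smul_add, h, h', map_add]; noncomm_ring
  | tmul a b =>
    induction v using TensorProduct.induction_on with
    | zero => simp [gm]
    | add v v' h h' =>
      rw [gm_add_right, smul_add, h, h', map_add]; noncomm_ring
    | tmul c d =>
      obtain ⟨b0, hb0, b1, hb1, rfl⟩ := par_decomp 𝒜 b
      obtain ⟨c0, hc0, c1, hc1, rfl⟩ := par_decomp 𝒜 c
      simp only [tmul_add, add_tmul, gm_add_left, gm_add_right, map_add]
      rw [gm_hom 𝒜 _ _ _ _ hb0 hc0, gm_hom 𝒜 _ _ _ _ hb1 hc0, gm_hom 𝒜 _ _ _ _ hb0 hc1,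
        gm_hom 𝒜 _ _ _ _ hb1 hc1, sg00, sg01, sg10, sg11]
      simp only [TensorProduct.map_tmul, AlgHom.toLinearMap_apply, LinearMap.id_apply,
        par_zero 𝒜 hb0, par_zero 𝒜 hc0, par_one 𝒜 hb1, par_one 𝒜 hc1, one_smul,
        mul_add, add_mul, Algebra.TensorProduct.tmul_mul_tmul, tmul_neg, neg_tmul, mul_neg, neg_mul,
        Units.neg_smul, two_smul]
      abel

lemma twist_form [CharZero k] (u : A ⊗[k] A) :
    (2 : k) • (GradedTensorProduct.of k 𝒜 𝒜).symm
      (superTwist k A 𝒜 (GradedTensorProduct.of k 𝒜 𝒜 u)) =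
    TensorProduct.comm k A A (u + TensorProduct.map (par 𝒜).toLinearMap LinearMap.id u
      + TensorProduct.map LinearMap.id (par 𝒜).toLinearMap u
      - TensorProduct.map (par 𝒜).toLinearMap (par 𝒜).toLinearMap u) := by
  have key : ∀ {i j : ZMod 2} (a b : A) (ha : a ∈ 𝒜 i) (hb : b ∈ 𝒜 j),
      (GradedTensorProduct.of k 𝒜 𝒜).symm
      (superTwist k A 𝒜 (GradedTensorProduct.of k 𝒜 𝒜 (a ⊗ₜ b))) =
        (-1 : ℤˣ) ^ (j * i) • (b ⊗ₜ[k] a) := by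
    intro i j a b ha hb
    exact GradedTensorProduct.comm_coe_tmul_coe (R := k) 𝒜 𝒜 ⟨a, ha⟩ ⟨b, hb⟩
  induction u using TensorProduct.induction_on with
  | zero => simp
  | add u u' h h' =>
    simp only [map_add, smul_add, map_sub] at h h' ⊢
    rw [h, h']; abel
  | tmul a b =>
    obtain ⟨b0, hb0, b1, hb1, rfl⟩ := par_decomp 𝒜 b
    obtain ⟨a0, ha0, a1, ha1, rfl⟩ := par_decomp 𝒜 a
    simp only [tmul_add, add_tmul, map_add]
    rw [key _ _ ha0 hb0, key _ _ ha0 hb1, key _ _ ha1 hb0, key _ _ ha1 hb1, sg00, sg01, sg10, sg11]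
    simp only [TensorProduct.map_tmul, AlgHom.toLinearMap_apply, LinearMap.id_apply,
        par_zero 𝒜 hb0, par_zero 𝒜 ha0, par_one 𝒜 hb1, par_one 𝒜 ha1, one_smul,
        tmul_neg, neg_tmul, map_add, map_sub, map_neg, TensorProduct.comm_tmul,
        tmul_add, add_tmul,
        Units.neg_smul, two_smul]
    abel

lemma tg_zero (u : A ⊗[k] A) (hu : u ∈ tensorGrade k A 𝒜 0) :
    TensorProduct.map (par 𝒜).toLinearMap (par 𝒜).toLinearMap u = u := by
  have : tensorGrade k A 𝒜 0 ≤ LinearMap.ker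
      (TensorProduct.map (par 𝒜).toLinearMap (par 𝒜).toLinearMap - LinearMap.id) := by
    refine iSup_le fun pq => iSup_le fun h => ?_
    rintro _ ⟨w, rfl⟩
    induction w using TensorProduct.induction_on with
    | zero => simp
    | add w w' h h' => rw [map_add]; exact add_mem h h'
    | tmul a b =>
      obtain ⟨p, q⟩ := pq
      obtain ⟨a, ha⟩ := a
      obtain ⟨b, hb⟩ := b
      simp only [LinearMap.mem_ker, LinearMap.sub_apply, TensorProduct.map_tmul,
        Submodule.subtype_apply, AlgHom.toLinearMap_apply, LinearMap.id_apply]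
      fin_cases p <;> fin_cases q
      · rw [par_zero 𝒜 ha, par_zero 𝒜 hb, sub_self]
      · exact absurd h (by decide)
      · exact absurd h (by decide)
      · rw [par_one 𝒜 ha, par_one 𝒜 hb, tmul_neg, neg_tmul, neg_neg, sub_self]
  have h := this hu
  rwa [LinearMap.mem_ker, LinearMap.sub_apply, sub_eq_zero] at h

lemma tg_one (u : A ⊗[k] A) (hu : u ∈ tensorGrade k A 𝒜 1) :
    TensorProduct.map (par 𝒜).toLinearMap (par 𝒜).toLinearMap u = -u := by
  have : tensorGrade k A 𝒜 1 ≤ LinearMap.ker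
      (TensorProduct.map (par 𝒜).toLinearMap (par 𝒜).toLinearMap + LinearMap.id) := by
    refine iSup_le fun pq => iSup_le fun h => ?_
    rintro _ ⟨w, rfl⟩
    induction w using TensorProduct.induction_on with
    | zero => simp
    | add w w' h h' => rw [map_add]; exact add_mem h h'
    | tmul a b =>
      obtain ⟨p, q⟩ := pq
      obtain ⟨a, ha⟩ := a
      obtain ⟨b, hb⟩ := b
      simp only [LinearMap.mem_ker, LinearMap.add_apply, TensorProduct.map_tmul,
        Submodule.subtype_apply, AlgHom.toLinearMap_apply, LinearMap.id_apply]
      fin_cases p <;> fin_cases q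
      · exact absurd h (by decide)
      · rw [par_zero 𝒜 ha, par_one 𝒜 hb, tmul_neg, neg_add_cancel]
      · rw [par_one 𝒜 ha, par_zero 𝒜 hb, neg_tmul, neg_add_cancel]
      · exact absurd h (by decide)
  have h := this hu
  rwa [LinearMap.mem_ker, LinearMap.add_apply, add_eq_zero_iff_eq_neg] at h

variable {𝒜} {comul : A →ₐ[k] (𝒜 ᵍ⊗[k] 𝒜)} {counit : A →ₐ[k] k} {antipode : A →ₗ[k] A}
  (hH : IsHopfSuperalgebra k A 𝒜 comul counit antipode)

/-- the coalgebra structure -/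
@[reducible] noncomputable def coalg (hH : IsHopfSuperalgebra k A 𝒜 comul counit antipode) :
    Coalgebra k A where
  comul := comulLin k A 𝒜 comul
  counit := counit.toLinearMap
  coassoc := by
    have h := hH.coassoc
    ext a
    have h1 := LinearMap.congr_fun h a
    exact (LinearEquiv.eq_symm_apply _).mp h1
  rTensor_counit_comp_comul := by
    ext a
    have h1 := LinearMap.congr_fun hH.counit_left a
    exact (LinearEquiv.eq_symm_apply (TensorProduct.lid k A)).mpr h1
  lTensor_counit_comp_comul := by
    ext a
    have h1 := LinearMap.congr_fun hH.counit_right a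
    exact (LinearEquiv.eq_symm_apply (TensorProduct.rid k A)).mpr h1

lemma comulLin_mul (a b : A) : comulLin k A 𝒜 comul (a * b) =
    gm 𝒜 (comulLin k A 𝒜 comul a) (comulLin k A 𝒜 comul b) := by
  simp only [comulLin, gm, LinearMap.comp_apply, AlgHom.toLinearMap_apply, map_mul]
  rfl

lemma mulRight_form (x : A) (u : A ⊗[k] A) :
    u * (x ⊗ₜ 1) = TensorProduct.map (LinearMap.mulRight k x) LinearMap.id u ∧
    u * (1 ⊗ₜ x) = TensorProduct.map LinearMap.id (LinearMap.mulRight k x) u := by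
  induction u using TensorProduct.induction_on with
  | zero => simp
  | add u u' h h' => rw [add_mul, add_mul, h.1, h'.1, h.2, h'.2, map_add, map_add]; exact ⟨rfl, rfl⟩
  | tmul a b => simp

lemma two_cancel [CharZero k] {M : Type} [AddCommGroup M] [Module k M] {u v : M}
    (h : (2 : k) • u = v + v) : u = v := by
  rw [← two_smul k v] at h
  exact smul_right_injective M (two_ne_zero (α := k)) h

/-- the working structure from the frozen axioms -/
noncomputable def mkSH [CharZero k] (hH : IsHopfSuperalgebra k A 𝒜 comul counit antipode) :
    @SH k _ A _ _ (coalg hH) :=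
  letI := coalg hH
  { s := par 𝒜
    ss := by
      intro a
      obtain ⟨a0, ha0, a1, ha1, rfl⟩ := par_decomp 𝒜 a
      simp only [map_add, par_zero 𝒜 ha0, par_one 𝒜 ha1, map_neg, neg_neg]
    e := counit
    e_eq := fun a => rfl
    es := by
      intro a
      obtain ⟨a0, ha0, a1, ha1, rfl⟩ := par_decomp 𝒜 a
      simp only [map_add, par_zero 𝒜 ha0, par_one 𝒜 ha1, map_neg, hH.counit_parity _ ha1, neg_zero]
    ch := antipode
    chs := by
      intro a
      obtain ⟨a0, ha0, a1, ha1, rfl⟩ := par_decomp 𝒜 a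
      simp only [map_add, par_zero 𝒜 ha0, par_one 𝒜 ha1, map_neg,
        par_zero 𝒜 (hH.antipode_parity _ _ ha0), par_one 𝒜 (hH.antipode_parity _ _ ha1)]
    anti_l := hH.antipode_left
    anti_r := hH.antipode_right
    ds := by
      intro a
      change comulLin k A 𝒜 comul _ = TensorProduct.map _ _ (comulLin k A 𝒜 comul _)
      obtain ⟨a0, ha0, a1, ha1, rfl⟩ := par_decomp 𝒜 a
      simp only [map_add, par_zero 𝒜 ha0, par_one 𝒜 ha1, map_neg,
        tg_zero 𝒜 _ (hH.comul_parity _ _ ha0), tg_one 𝒜 _ (hH.comul_parity _ _ ha1)]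
    d1 := by
      change (GradedTensorProduct.of k 𝒜 𝒜).symm (comul 1) = 1 ⊗ₜ 1
      rw [map_one]; rfl
    m1 := by
      intro a b h
      change comulLin k A 𝒜 comul _ = comulLin k A 𝒜 comul _ * comulLin k A 𝒜 comul _
      change TensorProduct.map _ _ (comulLin k A 𝒜 comul _) = comulLin k A 𝒜 comul _ at h
      rw [comulLin_mul]
      apply two_cancel (k := k)
      rw [gm_form, h]; abel
    m1' := by
      intro a b h
      change comulLin k A 𝒜 comul _ = comulLin k A 𝒜 comul _ * comulLin k A 𝒜 comul _
      change TensorProduct.map _ _ (comulLin k A 𝒜 comul _) = comulLin k A 𝒜 comul _ at h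
      rw [comulLin_mul]
      apply two_cancel (k := k)
      rw [gm_form, h]; abel
    m2 := by
      intro a x hx h
      change comulLin k A 𝒜 comul _ = TensorProduct.map _ _ (comulLin k A 𝒜 comul _)
        + TensorProduct.map _ _ (comulLin k A 𝒜 comul _)
      change comulLin k A 𝒜 comul _ = _ at h
      rw [comulLin_mul]
      apply two_cancel (k := k)
      rw [gm_form, h]
      generalize comulLin k A 𝒜 comul a = u
      have h3 : TensorProduct.map (LinearMap.mulRight k x) (par 𝒜).toLinearMap u =
          TensorProduct.map (LinearMap.mulRight k x) LinearMap.id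
            (TensorProduct.map LinearMap.id (par 𝒜).toLinearMap u) := by
        rw [← LinearMap.comp_apply, ← TensorProduct.map_comp]; rfl
      rw [h3, ← (mulRight_form x _).1, ← (mulRight_form x _).2]
      simp only [map_add, TensorProduct.map_tmul, AlgHom.toLinearMap_apply, LinearMap.id_apply,
        hx, map_one, neg_tmul]
      noncomm_ring
    cocomm := by
      intro a
      change (2 : k) • TensorProduct.comm k A A (comulLin k A 𝒜 comul _) =
        comulLin k A 𝒜 comul _ + TensorProduct.map _ _ (comulLin k A 𝒜 comul _)
        + TensorProduct.map _ _ (comulLin k A 𝒜 comul _)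
        - TensorProduct.map _ _ (comulLin k A 𝒜 comul _)
      have h1 := twist_form 𝒜 (comulLin k A 𝒜 comul a)
      have h2 : superTwist k A 𝒜 (GradedTensorProduct.of k 𝒜 𝒜 (comulLin k A 𝒜 comul a))
        = comul a := hH.cocomm a
      rw [h2] at h1
      change (2 : k) • comulLin k A 𝒜 comul a = _ at h1
      rw [← map_smul, h1]
      exact (TensorProduct.comm k A A).symm_apply_apply _
  }

end Bridge

open Abelian in
/-- Let `k` be a field of characteristic `0` and let `A` be a
finite-dimensional cocommutative Hopf superalgebra over `k`.  Then the cohomology ring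
`H^•(A,k) = Ext^•_A(k,k)` is a finitely generated `k`-algebra, and for every
finite-dimensional `ℤ/2`-graded `A`-module `M` the cohomology `H^•(A,M) = Ext^•_A(k,M)` is a
finitely generated module over `H^•(A,k)`. -/
theorem statement1 (k : Type) [Field k] [CharZero k]
    (A : Type) [Ring A] [Algebra k A] [FiniteDimensional k A]
    (𝒜 : ZMod 2 → Submodule k A) [GradedAlgebra 𝒜]
    (comul : A →ₐ[k] (𝒜 ᵍ⊗[k] 𝒜)) (counit : A →ₐ[k] k) (antipode : A →ₗ[k] A)
    (hHopf : IsHopfSuperalgebra k A 𝒜 comul counit antipode) :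
    -- `H^•(A,k)` is a finitely generated `k`-algebra
    (∃ S : Finset (Σ N : ℕ, Ext (trivCat k A counit) (trivCat k A counit) N),
      ∀ (N : ℕ) (x : Ext (trivCat k A counit) (trivCat k A counit) N),
        ExtAlgGen (k := k) (trivCat k A counit)
          (fun N' => {y | (⟨N', y⟩ : Σ N'' : ℕ, Ext (trivCat k A counit)
            (trivCat k A counit) N'') ∈ S}) N x) ∧
    -- and `H^•(A,M)` is a finitely generated `H^•(A,k)`-module for every
    -- finite-dimensional `ℤ/2`-graded `A`-module `M`
    (∀ (M : Type) [AddCommGroup M] [Module A M] [Module k M] [IsScalarTower k A M]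
        [FiniteDimensional k M] (ℳ : ZMod 2 → Submodule k M) [DirectSum.Decomposition ℳ],
      (∀ (i j : ZMod 2), ∀ a ∈ 𝒜 i, ∀ x ∈ ℳ j, a • x ∈ ℳ (i + j)) →
      ∃ T : Finset (Σ N : ℕ, Ext (trivCat k A counit) (ModuleCat.of A M) N),
        ∀ (N : ℕ) (x : Ext (trivCat k A counit) (ModuleCat.of A M) N),
          ExtModGen (k := k) (trivCat k A counit) (ModuleCat.of A M)
            (fun N' => {y | (⟨N', y⟩ : Σ N'' : ℕ, Ext (trivCat k A counit)
              (ModuleCat.of A M) N'') ∈ T}) N x) := by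
  letI := coalg hHopf
  obtain ⟨t, ht, hat⟩ := (mkSH hHopf).final
  obtain ⟨h1, h2⟩ := final_of_kos (mkSH hHopf).kos counit (mkSH hHopf).e_x t ht hat
  exact ⟨h1, fun M _ _ _ _ _ _ _ _ => h2 M⟩

end Stmt1
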